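/- arXiv:math/0610540 — 2 statements merged into one kernel-verified Lean document; each statement's English description precedes it below -/
import Mathlib

section
/- For every real C > 0 there exist constants A > 0 and B such that for every integer n ≥ 1 and every partition λ of n whose number of rows and number of columns are both at most C·√n, one has ∑ |χ^λ(π)|⁴ ≤ B, where the sum runs over all permutations π ∈ S_n with |π| ≤ A·n^{4/7}. -/
open scoped BigOperators

/-- `|π|`: the minimal number of transpositions whose product is `π`; equivalently
`n` minus the number of orbits of `π`. -/
def permLength {n : ℕ} (π : Equiv.Perm (Fin n)) : ℕ :=
  π.cycleType.sum - π.cycleType.card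

/-- The full cycle type of `π ∈ S_n`: the cycle type together with `1`s for fixed points. -/
def fullCycleType {n : ℕ} (π : Equiv.Perm (Fin n)) : Multiset ℕ :=
  π.cycleType + Multiset.replicate (n - π.cycleType.sum) 1

/-- For a partition `λ` of `n` (given as an antitone `lam : Fin n → ℕ`) and a multiset
`k` of positive integers, the irreducible character value `Tr ρ^λ(k)`, defined via
Frobenius' character formula as the coefficient of `x^(λ+δ)` in
`(∑ᵢ xᵢ^{k₁}) ⋯ (∑ᵢ xᵢ^{k_r}) ⋅ ∑_{w ∈ Sₙ} sgn(w) x^{wδ}`, where `δ = (n-1, …, 1, 0)`. -/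
noncomputable def frobChar (n : ℕ) (lam : Fin n → ℕ) (k : Multiset ℕ) : ℤ :=
  MvPolynomial.coeff
    (Finsupp.equivFunOnFinite.symm fun i : Fin n => lam i + (n - 1 - (i : ℕ)))
    ((Multiset.map (fun m => ∑ i : Fin n, MvPolynomial.X i ^ m) k).prod *
      ∑ w : Equiv.Perm (Fin n),
        MvPolynomial.C ((Equiv.Perm.sign w : ℤ)) *
          ∏ i : Fin n, MvPolynomial.X i ^ (n - 1 - ((w i : ℕ))))

/-- The normalized character `χ^λ(π) = Tr ρ^λ(π) / Tr ρ^λ(e)`. -/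
noncomputable def normChar (n : ℕ) (lam : Fin n → ℕ) (π : Equiv.Perm (Fin n)) : ℝ :=
  (frobChar n lam (fullCycleType π) : ℝ) / (frobChar n lam (Multiset.replicate n 1) : ℝ)


namespace FM
open Finset MvPolynomial

noncomputable section

abbrev Lam := MvPolynomial ℕ ℝ
abbrev MR := ℕ →₀ Lam

def dl (m : ℕ) : Derivation ℝ Lam MR :=
  MvPolynomial.mkDerivation ℝ (fun j => Finsupp.single (m + j) (C (j : ℝ)))

def V (a : ℕ) : Derivation ℝ Lam Lam :=
  MvPolynomial.mkDerivation ℝ (fun j => C (j : ℝ) * X (a + j))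

def J : MR →ₗ[ℝ] MR := Finsupp.lsum ℝ (fun m => (dl m : Lam →ₗ[ℝ] MR) +
  ∑ i ∈ Ico 1 m, (Finsupp.lsingle (m - i)) ∘ₗ LinearMap.mulLeft ℝ (X i : Lam))

def eps : MR →ₗ[ℝ] Lam := Finsupp.lsum ℝ (fun m => LinearMap.mulLeft ℝ (X m : Lam))

def D2 : Lam →ₗ[ℝ] Lam := eps ∘ₗ J ∘ₗ (dl 0 : Lam →ₗ[ℝ] MR)

def M : MR →ₗ[ℝ] MR := Finsupp.lsum ℝ (fun m => (Finsupp.lsingle m) ∘ₗ D2 +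
  (2 * ((m : ℝ) - 1)) • (dl m : Lam →ₗ[ℝ] MR) +
  ∑ i ∈ Ico 1 m, (2 * ((m : ℝ) - 1 - i)) •
    ((Finsupp.lsingle (m - i)) ∘ₗ LinearMap.mulLeft ℝ (X i : Lam)))

def sh (a : ℕ) : MR →ₗ[ℝ] MR := Finsupp.lsum ℝ (fun m => Finsupp.lsingle (m + a))
def VL (a : ℕ) : MR →ₗ[ℝ] MR :=
  Finsupp.lsum ℝ (fun m => Finsupp.lsingle m ∘ₗ (V a : Lam →ₗ[ℝ] Lam))
def Dm : MR →ₗ[ℝ] MR := Finsupp.lsum ℝ (fun m => ((m : ℝ) - 1) • Finsupp.lsingle m)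

/-- the splitting polynomial -/
def sp (a : ℕ) : Lam := ∑ i ∈ Ico 1 a, X i * X (a - i)

lemma J_single (m : ℕ) (g : Lam) : J (Finsupp.single m g) =
    dl m g + ∑ i ∈ Ico 1 m, Finsupp.single (m - i) (X i * g) := by
  simp [J]

lemma eps_single (m : ℕ) (g : Lam) : eps (Finsupp.single m g) = X m * g := by
  simp [eps]

lemma M_single (m : ℕ) (g : Lam) : M (Finsupp.single m g) =
    Finsupp.single m (D2 g) + (2 * ((m : ℝ) - 1)) • dl m g +
    ∑ i ∈ Ico 1 m, (2 * ((m : ℝ) - 1 - i)) • Finsupp.single (m - i) (X i * g) := by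
  simp [M]

lemma sh_single (a m : ℕ) (g : Lam) : sh a (Finsupp.single m g) = Finsupp.single (m + a) g := by
  simp [sh]
lemma VL_single (a m : ℕ) (g : Lam) : VL a (Finsupp.single m g) = Finsupp.single m (V a g) := by
  simp [VL]
lemma Dm_single (m : ℕ) (g : Lam) : Dm (Finsupp.single m g) =
    ((m : ℝ) - 1) • Finsupp.single m g := by
  simp [Dm]

lemma dl_mul (m a : ℕ) (g : Lam) : dl m (X a * g) =
    (X a : Lam) • dl m g + (a : ℝ) • Finsupp.single (m + a) g := by
  rw [Derivation.leibniz]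
  congr 1
  simp [dl, MvPolynomial.mkDerivation_X, MvPolynomial.smul_eq_C_mul, mul_comm]

lemma V_mul (b a : ℕ) (g : Lam) : V b (X a * g) =
    (X a : Lam) * V b g + (a : ℝ) • (X (b + a) * g) := by
  rw [Derivation.leibniz]
  simp only [smul_eq_mul]
  congr 1
  simp [V, MvPolynomial.mkDerivation_X, MvPolynomial.smul_eq_C_mul]; ring

lemma J_smul (a : ℕ) (G : MR) : J ((X a : Lam) • G) = (X a : Lam) • J G + (a : ℝ) • sh a G := by
  induction G using Finsupp.induction_linear with
  | zero => simp
  | add f g hf hg => simp only [smul_add, map_add, hf, hg]; abel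
  | single m g =>
    rw [Finsupp.smul_single, smul_eq_mul, J_single, J_single, dl_mul, sh_single, smul_add, smul_sum]
    have : ∀ i, Finsupp.single (m - i) ((X i : Lam) * (X a * g)) =
       (X a : Lam) • Finsupp.single (m - i) (X i * g) := by
      intro i; rw [Finsupp.smul_single, smul_eq_mul]; congr 1; ring
    simp only [this]
    abel

lemma eps_smul (f : Lam) (G : MR) : eps (f • G) = f * eps G := by
  induction G using Finsupp.induction_linear with
  | zero => simp
  | add f g hf hg => simp only [smul_add, map_add, hf, hg]; ring
  | single m g => rw [Finsupp.smul_single, smul_eq_mul, eps_single, eps_single]; ring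

lemma lam_ind {P : Lam → Prop} (h1 : P 1) (hs : ∀ (c : ℝ) g, P g → P (c • g))
    (ha : ∀ f g, P f → P g → P (f + g)) (hX : ∀ a g, P g → P (X a * g)) (g : Lam) : P g := by
  induction g using MvPolynomial.induction_on with
  | C c => have := hs c 1 h1; rwa [MvPolynomial.smul_eq_C_mul, mul_one] at this
  | add f g hf hg => exact ha _ _ hf hg
  | mul_X g a h => rw [mul_comm]; exact hX _ _ h

lemma dl_one (m : ℕ) : dl m 1 = 0 := Derivation.map_one_eq_zero _
lemma V_one (m : ℕ) : V m 1 = 0 := Derivation.map_one_eq_zero _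

lemma eps_dl (a : ℕ) (g : Lam) : eps (dl a g) = V a g := by
  induction g using lam_ind with
  | h1 => simp
  | hs c g h => simp [h]
  | ha f g hf hg => simp [hf, hg]
  | hX b g h => rw [dl_mul, V_mul, map_add, eps_smul, map_smul, eps_single, h]

lemma sh_dl (a m : ℕ) (g : Lam) : sh a (dl m g) = dl (m + a) g := by
  induction g using lam_ind with
  | h1 => simp
  | hs c g h => simp [h]
  | ha f g hf hg => simp [hf, hg]
  | hX b g h =>
    have : ∀ (f : Lam) (G : MR), sh a (f • G) = f • sh a G := by
      intro f G
      induction G using Finsupp.induction_linear with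
      | zero => simp
      | add f g hf hg => simp only [smul_add, map_add, hf, hg]
      | single m g => rw [Finsupp.smul_single, sh_single, sh_single, Finsupp.smul_single]
    rw [dl_mul, dl_mul, map_add, this, map_smul, sh_single, h, add_right_comm]

lemma D2_mul (a : ℕ) (g : Lam) : D2 (X a * g) =
    X a * D2 g + (2 * a : ℝ) • V a g + (a : ℝ) • (sp a * g) := by
  have h : ∀ g, D2 g = eps (J (dl 0 g)) := fun _ => rfl
  rw [h, dl_mul, map_add, J_smul, map_add, map_add, eps_smul, ← h, sh_dl, map_smul, map_smul,
    map_smul, eps_dl, zero_add, J_single, map_add, eps_dl, map_sum]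
  have : ∑ i ∈ Ico 1 a, eps (Finsupp.single (a - i) (X i * g)) = sp a * g := by
    rw [sp, sum_mul]; refine sum_congr rfl fun i _ => ?_
    rw [eps_single]; ring
  rw [this, mul_smul, two_smul, smul_add]
  abel

lemma D2_one : D2 1 = 0 := by
  have h : ∀ g, D2 g = eps (J (dl 0 g)) := fun _ => rfl
  rw [h, dl_one]; simp

lemma sum_refl_sp (m : ℕ) : (2:ℝ) • ∑ i ∈ Ico 1 m, ((m:ℝ) - i) • (X (m - i) * X i : Lam) =
    (m : ℝ) • sp m := by
  have h1 : ∑ i ∈ Ico 1 m, ((m:ℝ) - i) • (X (m - i) * X i : Lam) =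
      ∑ i ∈ Ico 1 m, (i : ℝ) • (X (m - i) * X i : Lam) := by
    apply Finset.sum_bij' (fun i _ => m - i) (fun i _ => m - i)
    · intro i hi; simp at hi ⊢; omega
    · intro i hi; simp at hi ⊢; omega
    · intro i hi; simp at hi ⊢; omega
    · intro i hi; simp at hi ⊢; omega
    · intro i hi
      simp only [mem_Ico] at hi
      rw [Nat.cast_sub (by omega), Nat.sub_sub_self (by omega), mul_comm]
  rw [two_smul]; nth_rw 1 [h1]
  rw [← sum_add_distrib, sp, smul_sum]
  refine sum_congr rfl fun i _ => ?_
  rw [← add_smul, mul_comm]; congr 1; ring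

lemma eps_total (G : MR) : D2 (eps G) = eps ((2:ℝ) • J G + M G) := by
  induction G using Finsupp.induction_linear with
  | zero => simp
  | add f g hf hg => simp only [smul_add, map_add, hf, hg]; abel
  | single m g =>
    rw [eps_single, D2_mul, map_add, map_smul, J_single, M_single]
    simp only [map_add, map_sum, map_smul, eps_single, eps_dl]
    rw [← smul_mul_assoc, ← sum_refl_sp, smul_mul_assoc, sum_mul, smul_add,
      smul_sum, smul_sum]
    have : ∑ i ∈ Ico 1 m, (2:ℝ) • ((((m:ℝ) - i) • (X (m - i) * X i : Lam)) * g) =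
       ∑ i ∈ Ico 1 m, (2:ℝ) • (X (m - i) * (X i * g) : Lam) +
       ∑ i ∈ Ico 1 m, (2 * ((m : ℝ) - 1 - i)) • (X (m - i) * (X i * g) : Lam) := by
      rw [← sum_add_distrib]
      refine sum_congr rfl fun i _ => ?_
      rw [← add_smul, smul_mul_assoc, smul_smul, mul_assoc]; congr 1; ring
    rw [this]
    have : (2 * (m:ℝ)) • V m g = (2:ℝ) • V m g + (2 * ((m:ℝ) - 1)) • V m g := by
      rw [← add_smul]; congr 1; ring
    rw [this]
    abel

end
end FM

namespace FM
open Finset MvPolynomial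
noncomputable section

lemma sh_smul (a : ℕ) (f : Lam) (G : MR) : sh a (f • G) = f • sh a G := by
  induction G using Finsupp.induction_linear with
  | zero => simp
  | add f g hf hg => simp only [smul_add, map_add, hf, hg]
  | single m g => rw [Finsupp.smul_single, sh_single, sh_single, Finsupp.smul_single]

lemma Dm_smul (f : Lam) (G : MR) : Dm (f • G) = f • Dm G := by
  induction G using Finsupp.induction_linear with
  | zero => simp
  | add f g hf hg => simp only [smul_add, map_add, hf, hg]
  | single m g => rw [Finsupp.smul_single, Dm_single, Dm_single, smul_comm f, ← Finsupp.smul_single f]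

lemma VL_smul (b a : ℕ) (G : MR) : VL b ((X a : Lam) • G) =
    (X a : Lam) • VL b G + (a : ℝ) • (X (b + a) : Lam) • G := by
  induction G using Finsupp.induction_linear with
  | zero => simp
  | add f g hf hg => simp only [smul_add, map_add, hf, hg]; abel
  | single m g =>
    simp only [Finsupp.smul_single, VL_single, smul_eq_mul, V_mul, Finsupp.single_add]

lemma M_smul (a : ℕ) (G : MR) : M ((X a : Lam) • G) = (X a : Lam) • M G +
    (a : ℝ) • sp a • G + (2 * a : ℝ) • VL a G + (2 * a : ℝ) • sh a (Dm G) := by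
  induction G using Finsupp.induction_linear with
  | zero => simp
  | add f g hf hg => simp only [smul_add, map_add, hf, hg]; abel
  | single m g =>
    rw [Finsupp.smul_single, smul_eq_mul, M_single, M_single, dl_mul, D2_mul, Dm_single,
      VL_single, map_smul, sh_single]
    have : ∀ i, Finsupp.single (m - i) ((X i : Lam) * (X a * g)) =
       (X a : Lam) • Finsupp.single (m - i) (X i * g) := by
      intro i; rw [Finsupp.smul_single, smul_eq_mul]; congr 1; ring
    simp only [this]
    have e1 : ∑ i ∈ Ico 1 m, (2 * ((m : ℝ) - 1 - i)) • (X a : Lam) •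
        (Finsupp.single (m - i) ((X i : Lam) * g) : MR) =
        (X a : Lam) • ∑ i ∈ Ico 1 m, (2 * ((m : ℝ) - 1 - i)) •
        (Finsupp.single (m - i) ((X i : Lam) * g) : MR) := by
      rw [smul_sum]; exact sum_congr rfl fun i _ => smul_comm _ _ _
    have e2 : (Finsupp.single m (X a * D2 g + (2 * a : ℝ) • V a g + (a : ℝ) • (sp a * g)) : MR) =
        (X a : Lam) • Finsupp.single m (D2 g) + (2 * a : ℝ) • Finsupp.single m (V a g) +
        (a : ℝ) • sp a • Finsupp.single m g := by
      simp only [Finsupp.single_add, Finsupp.smul_single, smul_eq_mul]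
    rw [e1, e2]
    generalize (∑ i ∈ Ico 1 m, (2 * ((m : ℝ) - 1 - i)) •
        (Finsupp.single (m - i) ((X i : Lam) * g) : MR)) = S
    generalize (Finsupp.single m (D2 g) : MR) = A1
    generalize (Finsupp.single m (V a g) : MR) = A2
    generalize (Finsupp.single m g : MR) = A3
    generalize (Finsupp.single (m + a) g : MR) = A4
    generalize dl m g = A5
    rw [smul_add, smul_add, smul_add, smul_comm (X a : Lam), smul_smul, smul_smul]
    have h2 : (2 * ((m:ℝ) - 1) * a) = 2 * a * ((m:ℝ) - 1) := by ring
    rw [h2]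
    abel

lemma sh_sh (a b : ℕ) (G : MR) : sh a (sh b G) = sh (a + b) G := by
  induction G using Finsupp.induction_linear with
  | zero => simp
  | add f g hf hg => simp only [map_add, hf, hg]
  | single m g => rw [sh_single, sh_single, sh_single]; congr 1; omega

lemma VL_sh (a b : ℕ) (G : MR) : VL a (sh b G) = sh b (VL a G) := by
  induction G using Finsupp.induction_linear with
  | zero => simp
  | add f g hf hg => simp only [map_add, hf, hg]
  | single m g => simp only [sh_single, VL_single]

lemma Dm_sh (b : ℕ) (G : MR) : Dm (sh b G) = sh b (Dm G) + (b : ℝ) • sh b G := by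
  induction G using Finsupp.induction_linear with
  | zero => simp
  | add f g hf hg => simp only [map_add, hf, hg, smul_add]; abel
  | single m g =>
    simp only [sh_single, Dm_single, map_smul]
    rw [← add_smul]; congr 1; push_cast; ring

lemma split_sum (h : ℕ → MR) (a m : ℕ) :
    ∑ i ∈ Ico 1 (m + a), ((a : ℝ) - i) • h i + ∑ i ∈ Ico 1 m, (i : ℝ) • h (a + i) =
    ∑ i ∈ Ico 1 a, ((a : ℝ) - i) • h i := by
  induction m with
  | zero => simp
  | succ m ih =>
    rcases Nat.eq_zero_or_pos m with rfl | hm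
    · rcases Nat.eq_zero_or_pos a with rfl | ha
      · simp
      · rw [zero_add, add_comm 1 a, sum_Ico_succ_top ha]; simp
    · rw [sum_Ico_succ_top hm, show m + 1 + a = (m + a) + 1 by ring, sum_Ico_succ_top (show 1 ≤ m + a by omega),
        ← ih, add_comm m a]
      push_cast
      module

/-- first-order identity -/
lemma comm_one (a m : ℕ) (g : Lam) :
    let G : MR := Finsupp.single m g
    (2:ℝ) • VL a (J G) + (2:ℝ) • sh a (Dm (J G)) + M (sh a G) =
    sh a (M G) + (2:ℝ) • ∑ i ∈ Ico 1 a, (i : ℝ) • (X (a - i) : Lam) • sh i G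
      + (2:ℝ) • J (VL a G) + (2:ℝ) • J (sh a (Dm G)) := by
  intro G
  simp only [G]
  clear G
  induction g using lam_ind with
  | hs c g h =>
    have hc : (Finsupp.single m (c • g) : MR) = c • Finsupp.single m g := by simp
    have := congrArg (fun x => c • x) h
    simp only [hc, map_smul]
    simp only [smul_add, smul_sum] at this ⊢
    convert this using 1
    · simp only [smul_comm c]
    · simp only [smul_comm c]
  | ha f g hf hg =>
    have := congrArg₂ (· + ·) hf hg
    simp only [Finsupp.single_add, map_add, smul_add, sum_add_distrib] at this ⊢
    convert this using 1 <;> abel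
  | hX b g h =>
    have hc : (Finsupp.single m (X b * g) : MR) = (X b : Lam) • Finsupp.single m g := by simp
    rw [hc]
    generalize (Finsupp.single m g : MR) = G at h
    have e1 : ∀ i, sh i ((X b : Lam) • G) = (X b : Lam) • sh i G := fun i => sh_smul _ _ _
    have e2 : ∑ i ∈ Ico 1 a, (i : ℝ) • (X (a - i) : Lam) • (X b : Lam) • sh i G =
       (X b : Lam) • ∑ i ∈ Ico 1 a, (i : ℝ) • (X (a - i) : Lam) • sh i G := by
      rw [smul_sum]; refine sum_congr rfl fun i _ => ?_
      rw [smul_comm (X b : Lam), smul_comm (X b : Lam)]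
    simp only [J_smul, M_smul, VL_smul, sh_smul, Dm_smul, map_add, map_smul, VL_sh, Dm_sh, sh_sh,
      e2]
    generalize (∑ i ∈ Ico 1 a, (i : ℝ) • (X (a - i) : Lam) • sh i G) = S at h ⊢
    rw [add_comm b a]
    generalize VL a (J G) = A1 at *
    generalize sh a (Dm (J G)) = A2 at *
    generalize M (sh a G) = A3 at *
    generalize sh a (M G) = A4 at *
    generalize J (VL a G) = A5 at *
    generalize J (sh a (Dm G)) = A6 at *
    generalize sh b (VL a G) = A7 at *
    generalize J G = A8 at *
    generalize sh (a + b) (Dm G) = A9 at *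
    generalize sh (a + b) G = A10 at *
    generalize sh a G = A11 at *
    generalize sh a (VL b G) = A12 at *
    have h' := congrArg (fun x => (X b : Lam) • x) h
    simp only [smul_add, smul_comm (X b : Lam) (2:ℝ)] at h' ⊢
    generalize sp b • A11 = A13 at *
    rw [← sub_eq_zero] at h' ⊢
    refine Eq.trans ?_ ((congrArg (fun x => (1:ℝ) • x) h').trans (smul_zero _))
    beta_reduce
    module
  | h1 =>
    set h : ℕ → MR := fun i => Finsupp.single (m + a - i) (X i) with hh
    have V1 : ∀ i, V a (X i) = (i : ℝ) • (X (a + i) : Lam) := by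
      intro i; have := V_mul a i 1; simpa [V_one] using this
    have e1 : VL a (J (Finsupp.single m 1)) = ∑ i ∈ Ico 1 m, (i : ℝ) • h (a + i) := by
      rw [J_single, dl_one, zero_add, map_sum]
      refine sum_congr rfl fun i _ => ?_
      rw [VL_single, mul_one, V1, ← Finsupp.smul_single, hh]
      simp only
      rw [show m + a - (a + i) = m - i by omega]
    have e2 : sh a (Dm (J (Finsupp.single m 1))) = ∑ i ∈ Ico 1 m, ((m:ℝ) - 1 - i) • h i := by
      rw [J_single, dl_one, zero_add, map_sum, map_sum]
      refine sum_congr rfl fun i hi => ?_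
      simp only [mem_Ico] at hi
      rw [Dm_single, map_smul, sh_single, mul_one, hh, Nat.cast_sub (by omega)]
      simp only
      rw [show m - i + a = m + a - i by omega, sub_right_comm]
    have e3 : M (sh a (Finsupp.single m 1)) =
        ∑ i ∈ Ico 1 (m + a), (2 * ((m:ℝ) + a - 1 - i)) • h i := by
      rw [sh_single, M_single, dl_one, D2_one]
      simp [hh]
    have e4 : sh a (M (Finsupp.single m 1)) =
        ∑ i ∈ Ico 1 m, (2 * ((m:ℝ) - 1 - i)) • h i := by
      rw [M_single, dl_one, D2_one]
      simp only [Finsupp.single_zero, smul_zero, zero_add, map_sum, map_smul, sh_single, mul_one]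
      refine sum_congr rfl fun i hi => ?_
      simp only [mem_Ico] at hi
      rw [hh]; simp only
      rw [show m - i + a = m + a - i by omega]
    have e5 : ∑ i ∈ Ico 1 a, (i : ℝ) • (X (a - i) : Lam) • sh i (Finsupp.single m 1) =
        ∑ i ∈ Ico 1 a, ((a:ℝ) - i) • h i := by
      apply Finset.sum_bij' (fun i _ => a - i) (fun i _ => a - i)
      · intro i hi; simp at hi ⊢; omega
      · intro i hi; simp at hi ⊢; omega
      · intro i hi; simp at hi ⊢; omega
      · intro i hi; simp at hi ⊢; omega
      · intro i hi
        simp only [mem_Ico] at hi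
        rw [Nat.cast_sub (by omega), sh_single, Finsupp.smul_single, hh]
        simp only [smul_eq_mul, mul_one]
        rw [show m + a - (a - i) = m + i by omega]
        congr 1; ring
    have e6 : J (VL a (Finsupp.single m 1)) = 0 := by
      rw [VL_single, V_one]; simp
    have e7 : J (sh a (Dm (Finsupp.single m 1))) =
        ∑ i ∈ Ico 1 (m + a), ((m:ℝ) - 1) • h i := by
      rw [Dm_single, map_smul, sh_single, map_smul, J_single, dl_one]
      simp [hh, smul_sum]
    rw [e1, e2, e3, e4, e5, e6, e7, ← split_sum h a m]
    have e8 : ∑ i ∈ Ico 1 (m + a), (2 * ((m:ℝ) + a - 1 - i)) • h i =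
        (2:ℝ) • ∑ i ∈ Ico 1 (m + a), ((m:ℝ) - 1) • h i +
        (2:ℝ) • ∑ i ∈ Ico 1 (m + a), ((a:ℝ) - i) • h i := by
      rw [smul_sum, smul_sum, ← sum_add_distrib]
      refine sum_congr rfl fun i _ => ?_
      module
    have e9 : ∑ i ∈ Ico 1 m, (2 * ((m:ℝ) - 1 - i)) • h i =
        (2:ℝ) • ∑ i ∈ Ico 1 m, ((m:ℝ) - 1 - i) • h i := by
      rw [smul_sum]
      refine sum_congr rfl fun i _ => ?_
      module
    rw [e8, e9]
    module

lemma comm_one' (a : ℕ) (G : MR) :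
    (2:ℝ) • VL a (J G) + (2:ℝ) • sh a (Dm (J G)) + M (sh a G) =
    sh a (M G) + (2:ℝ) • ∑ i ∈ Ico 1 a, (i : ℝ) • (X (a - i) : Lam) • sh i G
      + (2:ℝ) • J (VL a G) + (2:ℝ) • J (sh a (Dm G)) := by
  induction G using Finsupp.induction_linear with
  | zero => simp
  | add f g hf hg =>
    have := congrArg₂ (· + ·) hf hg
    simp only [map_add, smul_add, sum_add_distrib] at this ⊢
    convert this using 1 <;> abel
  | single m g => exact comm_one a m g

lemma J_sp (a : ℕ) (G : MR) : J (sp a • G) = sp a • J G +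
    (2:ℝ) • ∑ i ∈ Ico 1 a, (i : ℝ) • (X (a - i) : Lam) • sh i G := by
  have h1 : ∑ i ∈ Ico 1 a, ((a - i : ℕ) : ℝ) • (X i : Lam) • sh (a - i) G =
      ∑ i ∈ Ico 1 a, (i : ℝ) • (X (a - i) : Lam) • sh i G := by
    apply Finset.sum_bij' (fun i _ => a - i) (fun i _ => a - i)
    · intro i hi; simp at hi ⊢; omega
    · intro i hi; simp at hi ⊢; omega
    · intro i hi; simp at hi ⊢; omega
    · intro i hi; simp at hi ⊢; omega
    · intro i hi
      simp only [mem_Ico] at hi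
      rw [Nat.sub_sub_self (by omega)]
  rw [sp, sum_smul, map_sum, sum_smul, two_smul]
  nth_rw 1 [← h1]
  rw [← sum_add_distrib, ← sum_add_distrib]
  refine sum_congr rfl fun i _ => ?_
  rw [mul_smul, J_smul, J_smul, sh_smul, smul_add, mul_smul,
    smul_comm (X i : Lam) (((a - i : ℕ)) : ℝ)]
  abel

lemma tri_sum (m : ℕ) (h : ℕ → ℕ → MR) (hs : ∀ i j, h i j = h j i) :
    ∑ i ∈ Ico 1 m, ∑ j ∈ Ico 1 (m - i), (2 * ((m:ℝ) - i - 1 - j)) • h i j +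
    ∑ i ∈ Ico 1 m, (i : ℝ) • ∑ t ∈ Ico 1 i, h t (i - t) =
    ∑ i ∈ Ico 1 m, ∑ j ∈ Ico 1 (m - i), (2 * ((m:ℝ) - 1 - i)) • h i j := by
  have h1 : ∑ i ∈ Ico 1 m, (i : ℝ) • ∑ t ∈ Ico 1 i, h t (i - t) =
      ∑ i ∈ Ico 1 m, ∑ j ∈ Ico 1 (m - i), ((i:ℝ) + j) • h i j := by
    simp only [smul_sum]
    rw [sum_sigma', sum_sigma']
    apply Finset.sum_bij' (fun x _ => (⟨x.2, x.1 - x.2⟩ : Σ _ : ℕ, ℕ))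
      (fun x _ => (⟨x.1 + x.2, x.1⟩ : Σ _ : ℕ, ℕ))
    · rintro ⟨i, t⟩ hi; simp at hi ⊢; omega
    · rintro ⟨i, t⟩ hi; simp at hi ⊢; omega
    · rintro ⟨i, t⟩ hi; simp at hi ⊢; omega
    · rintro ⟨i, t⟩ hi; simp at hi ⊢
    · rintro ⟨i, t⟩ hi
      simp only [mem_sigma, mem_Ico] at hi
      simp only
      rw [Nat.cast_sub (by omega)]; congr 1; ring
  have h2 : ∑ i ∈ Ico 1 m, ∑ j ∈ Ico 1 (m - i), (i : ℝ) • h i j =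
      ∑ i ∈ Ico 1 m, ∑ j ∈ Ico 1 (m - i), (j : ℝ) • h i j := by
    rw [sum_sigma', sum_sigma']
    apply Finset.sum_bij' (fun x _ => (⟨x.2, x.1⟩ : Σ _ : ℕ, ℕ))
      (fun x _ => (⟨x.2, x.1⟩ : Σ _ : ℕ, ℕ))
    · rintro ⟨i, t⟩ hi; simp at hi ⊢; omega
    · rintro ⟨i, t⟩ hi; simp at hi ⊢; omega
    · rintro ⟨i, t⟩ hi; simp
    · rintro ⟨i, t⟩ hi; simp
    · rintro ⟨i, t⟩ hi
      simp only
      rw [hs]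
  have h3 : ∑ i ∈ Ico 1 m, ∑ j ∈ Ico 1 (m - i), (2 * ((m:ℝ) - i - 1 - j)) • h i j =
      ∑ i ∈ Ico 1 m, ∑ j ∈ Ico 1 (m - i), (2 * ((m:ℝ) - 1 - i)) • h i j -
      (2:ℝ) • ∑ i ∈ Ico 1 m, ∑ j ∈ Ico 1 (m - i), (j : ℝ) • h i j := by
    simp only [smul_sum, ← sum_sub_distrib]
    refine sum_congr rfl fun i _ => sum_congr rfl fun j _ => ?_
    module
  rw [h1, h3]
  simp only [add_smul, sum_add_distrib]
  rw [h2]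
  module

lemma MJ_comm (G : MR) : M (J G) = J (M G) := by
  induction G using Finsupp.induction_linear with
  | zero => simp
  | add f g hf hg => simp only [map_add, hf, hg]
  | single m g =>
    induction g using lam_ind with
    | hs c g h =>
      have hc : (Finsupp.single m (c • g) : MR) = c • Finsupp.single m g := by simp
      simp only [hc, map_smul, h]
    | ha f g hf hg => simp only [Finsupp.single_add, map_add, hf, hg]
    | hX a g h =>
      have hc : (Finsupp.single m (X a * g) : MR) = (X a : Lam) • Finsupp.single m g := by simp
      rw [hc]
      generalize (Finsupp.single m g : MR) = G at h
      have c1 := comm_one' a G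
      simp only [J_smul, M_smul, map_add, map_smul, J_sp]
      rw [← h]
      generalize (∑ i ∈ Ico 1 a, (i : ℝ) • (X (a - i) : Lam) • sh i G) = S at *
      generalize VL a (J G) = A1 at *
      generalize sh a (Dm (J G)) = A2 at *
      generalize M (sh a G) = A3 at *
      generalize sh a (M G) = A4 at *
      generalize J (VL a G) = A5 at *
      generalize J (sh a (Dm G)) = A6 at *
      generalize (X a : Lam) • M (J G) = A7 at *
      generalize sp a • J G = A8 at *
      rw [← sub_eq_zero] at c1 ⊢
      refine Eq.trans ?_ ((congrArg (fun x => (a:ℝ) • x) c1).trans (smul_zero _))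
      module
    | h1 =>
      have e1 : J (Finsupp.single m 1) = ∑ i ∈ Ico 1 m, (X i : Lam) • Finsupp.single (m - i) 1 := by
        rw [J_single, dl_one, zero_add]
        refine sum_congr rfl fun i _ => ?_
        simp
      have e2 : M (Finsupp.single m 1) = ∑ i ∈ Ico 1 m, (2 * ((m:ℝ) - 1 - i)) •
          (X i : Lam) • Finsupp.single (m - i) 1 := by
        rw [M_single, dl_one, D2_one]
        simp
      have e3 : ∀ i ∈ Ico 1 m, M ((X i : Lam) • Finsupp.single (m - i) 1) =
          ∑ j ∈ Ico 1 (m - i), (2 * ((m:ℝ) - i - 1 - j)) •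
            (Finsupp.single (m - i - j) (X i * X j) : MR) +
          (i : ℝ) • ∑ t ∈ Ico 1 i, (Finsupp.single (m - t - (i - t)) (X t * X (i - t)) : MR) +
          (2 * (i:ℝ) * ((m:ℝ) - 1 - i)) • Finsupp.single m 1 := by
        intro i hi
        simp only [mem_Ico] at hi
        rw [M_smul, VL_single, V_one, Dm_single, map_smul, sh_single, M_single, dl_one, D2_one]
        rw [Nat.cast_sub (by omega), show m - i + i = m by omega]
        simp only [Finsupp.single_zero, smul_zero, zero_add, add_zero, smul_sum, mul_one]
        congr 1
        · congr 1
          · refine sum_congr rfl fun j _ => ?_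
            rw [smul_comm (X i : Lam), Finsupp.smul_single, smul_eq_mul]
          · rw [← smul_sum]
            congr 1
            rw [Finsupp.smul_single, smul_eq_mul, mul_one, sp, ← Finsupp.lsingle_apply (R := ℝ), map_sum]
            simp only [Finsupp.lsingle_apply]
            refine sum_congr rfl fun t ht => ?_
            simp only [mem_Ico] at ht
            rw [show m - t - (i - t) = m - i by omega]
        · rw [smul_smul]; congr 1; ring
      have e4 : ∀ i ∈ Ico 1 m, J ((2 * ((m:ℝ) - 1 - i)) • (X i : Lam) • Finsupp.single (m - i) 1) =
          ∑ j ∈ Ico 1 (m - i), (2 * ((m:ℝ) - 1 - i)) •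
            (Finsupp.single (m - i - j) (X i * X j) : MR) +
          (2 * (i:ℝ) * ((m:ℝ) - 1 - i)) • Finsupp.single m 1 := by
        intro i hi
        simp only [mem_Ico] at hi
        rw [map_smul, J_smul, sh_single, J_single, dl_one, show m - i + i = m by omega]
        rw [zero_add, smul_add, smul_sum, smul_sum, smul_smul]
        congr 1
        · refine sum_congr rfl fun j _ => ?_
          rw [Finsupp.smul_single, smul_eq_mul, mul_one]
        · congr 1; ring
      rw [e1, e2, map_sum, map_sum, sum_congr rfl e3, sum_congr rfl e4]
      simp only [sum_add_distrib]
      congr 1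
      exact tri_sum m (fun i j => (Finsupp.single (m - i - j) (X i * X j) : MR)) (by
        intro i j
        rw [mul_comm, Nat.sub_right_comm])

end
end FM

namespace FM
open Finset MvPolynomial
noncomputable section

abbrev PN (N : ℕ) := MvPolynomial (Fin N) ℝ

def ev (N : ℕ) : Lam →ₐ[ℝ] PN N := aeval (fun j => ∑ i : Fin N, (X i : PN N) ^ j)

def alt (N : ℕ) : PN N := ∑ w : Equiv.Perm (Fin N),
  C (((Equiv.Perm.sign w : ℤ)) : ℝ) * ∏ i : Fin N, X i ^ (N - 1 - ((w i : ℕ)))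

def pw (N a : ℕ) : PN N := ∑ i : Fin N, (X i : PN N) ^ a

lemma ev_X (N j : ℕ) : ev N (X j) = pw N j := by simp [ev, pw]

def th {N : ℕ} (i : Fin N) : Derivation ℝ (PN N) (PN N) := (X i : PN N) • pderiv i

def dd (N a : ℕ) : Derivation ℝ (PN N) (PN N) :=
  mkDerivation ℝ (fun k => (X k : PN N) ^ (a + 1))

lemma th_X_self {N : ℕ} (i : Fin N) : th i (X i) = X i := by simp [th]
lemma th_X_ne {N : ℕ} (i j : Fin N) (h : i ≠ j) : th i (X j) = 0 := by
  simp [th, pderiv_X_of_ne h.symm]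

lemma th_pow {N : ℕ} (i j : Fin N) (a : ℕ) :
    th i ((X j : PN N) ^ a) = if j = i then (a : ℝ) • (X i) ^ a else 0 := by
  rw [Derivation.leibniz_pow]
  split_ifs with h
  · subst h
    rw [th_X_self]
    rcases a with _ | a
    · simp
    · simp only [smul_eq_mul, Nat.add_sub_cancel, ← pow_succ]
      rw [← Nat.cast_smul_eq_nsmul ℝ]
  · rw [th_X_ne _ _ (Ne.symm h)]; simp

lemma th_pw {N : ℕ} (i : Fin N) (a : ℕ) : th i (pw N a) = (a : ℝ) • (X i) ^ a := by
  rw [pw, map_sum]; simp only [th_pow]; simp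

lemma dd_eq (N a : ℕ) (F : PN N) : dd N a F = ∑ i, (X i : PN N) ^ a * th i F := by
  induction F using MvPolynomial.induction_on with
  | C c => simp
  | add p q hp hq => simp only [map_add, hp, hq, mul_add, sum_add_distrib]
  | mul_X p j hp =>
    rw [Derivation.leibniz, hp]
    have : ∀ i, (X i : PN N) ^ a * th i (p * X j) =
      (if j = i then (X i : PN N) ^ a * (p * X i) else 0) + X j * ((X i : PN N) ^ a * th i p) := by
      intro i
      rw [Derivation.leibniz]
      split_ifs with h
      · subst h; rw [th_X_self]; simp only [smul_eq_mul]; ring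
      · rw [th_X_ne _ _ (Ne.symm h)]; simp only [smul_eq_mul]; ring
    simp only [this, sum_add_distrib, ← mul_sum]
    simp [dd, mkDerivation_X]
    ring

lemma th_monomial {N : ℕ} (i : Fin N) (u : Fin N →₀ ℕ) (c : ℝ) :
    th i (monomial u c) = (u i : ℝ) • monomial u c := by
  simp only [th, Derivation.smul_apply, smul_eq_mul, X_mul_pderiv_monomial]
  rw [Nat.cast_smul_eq_nsmul]

def c0 (N : ℕ) : ℝ := -(∑ i : Fin N, ((N - 1 - (i : ℕ) : ℕ) : ℝ) ^ 2 -
  (2 * N - 1) * ∑ i : Fin N, ((N - 1 - (i : ℕ) : ℕ) : ℝ))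

def qq {N : ℕ} (u : Fin N →₀ ℕ) : ℝ := ∑ i, (u i : ℝ) ^ 2 - (2 * N - 1) * ∑ i, (u i : ℝ) + c0 N

def Dop (N : ℕ) : PN N →ₗ[ℝ] PN N :=
  ∑ i, ((th i).toLinearMap ∘ₗ (th i).toLinearMap)
   - (2 * N - 1 : ℝ) • ∑ i, (th i).toLinearMap + c0 N • LinearMap.id

lemma Dop_apply (N : ℕ) (F : PN N) : Dop N F = ∑ i, th i (th i F) - (2 * N - 1 : ℝ) • ∑ i, th i F
    + c0 N • F := by
  simp [Dop, LinearMap.sum_apply]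

lemma Dop_monomial {N : ℕ} (u : Fin N →₀ ℕ) (c : ℝ) :
    Dop N (monomial u c) = qq u • monomial u c := by
  rw [Dop_apply]
  simp only [th_monomial, Derivation.map_smul, smul_smul, ← sum_smul, ← sub_smul, ← add_smul, qq, pow_two]

lemma coeff_Dop {N : ℕ} (u : Fin N →₀ ℕ) (F : PN N) : coeff u (Dop N F) = qq u * coeff u F := by
  induction F using MvPolynomial.induction_on' with
  | monomial v c =>
    rw [Dop_monomial, coeff_smul, coeff_monomial]
    split_ifs with h
    · subst h; simp
    · simp
  | add p q hp hq => simp only [map_add, coeff_add, hp, hq, mul_add]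

lemma mon_eq {N : ℕ} (e : Fin N → ℕ) : ∏ i : Fin N, (X i : PN N) ^ (e i) =
    monomial (Finsupp.equivFunOnFinite.symm e) 1 := by
  rw [monomial_eq, C_1, one_mul, Finsupp.prod_fintype]
  · rfl
  · simp

lemma Dop_alt (N : ℕ) : Dop N (alt N) = 0 := by
  rw [alt, map_sum]
  refine sum_eq_zero fun w _ => ?_
  rw [mon_eq (fun i => N - 1 - ((w i : ℕ))), C_mul_monomial, Dop_monomial]
  have : qq (Finsupp.equivFunOnFinite.symm (fun i : Fin N => N - 1 - ((w i : ℕ)))) = 0 := by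
    simp only [qq, c0, Finsupp.equivFunOnFinite_symm_apply_apply]
    rw [Equiv.sum_comp w (fun i : Fin N => ((N - 1 - (i : ℕ) : ℕ) : ℝ) ^ 2),
      Equiv.sum_comp w (fun i : Fin N => ((N - 1 - (i : ℕ) : ℕ) : ℝ))]
    ring
  rw [this, zero_smul]

lemma alt_vand (N : ℕ) : ∃ s : ℝ, alt N =
    C s * ∏ i : Fin N, ∏ j ∈ Ioi i, ((X j : PN N) - X i) := by
  have h : alt N = ((Matrix.vandermonde (fun i : Fin N => (X i : PN N))).transpose.submatrix
      Fin.revPerm id).det := by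
    rw [Matrix.det_apply', alt]
    refine sum_congr rfl fun w _ => ?_
    congr 1
    refine prod_congr rfl fun i _ => ?_
    simp only [Matrix.submatrix_apply, Matrix.transpose_apply, Matrix.vandermonde_apply, id]
    congr 1
    simp only [Fin.revPerm_apply, Fin.val_rev]; omega
  rw [Matrix.det_permute, Matrix.det_transpose, Matrix.det_vandermonde] at h
  refine ⟨((Equiv.Perm.sign (Fin.revPerm : Equiv.Perm (Fin N)) : ℤ) : ℝ), ?_⟩
  rw [h]; congr 1

lemma deriv_prod {R : Type*} [CommRing R] [Algebra ℝ R] (d : Derivation ℝ R R) {ι : Type*}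
    (s : Finset ι) (b c : ι → R) (h : ∀ i ∈ s, d (b i) = b i * c i) :
    d (∏ i ∈ s, b i) = (∏ i ∈ s, b i) * ∑ i ∈ s, c i := by
  classical
  induction s using Finset.induction_on with
  | empty => simp
  | insert a s ha ih =>
    rw [prod_insert ha, sum_insert ha, Derivation.leibniz, ih (fun i hi => h i (mem_insert_of_mem hi)),
      h a (mem_insert_self _ _)]
    simp only [smul_eq_mul]; ring

lemma dd_alt (N a : ℕ) : (2 : ℝ) • dd N a (alt N) =
    (∑ t ∈ range (a + 1), (pw N t * pw N (a - t) - pw N a)) * alt N := by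
  obtain ⟨s, hs⟩ := alt_vand N
  have h : dd N a (alt N) = alt N * ∑ i : Fin N, ∑ j ∈ Ioi i,
      ∑ t ∈ range (a + 1), (X j : PN N) ^ t * X i ^ (a - t) := by
    rw [hs, Derivation.leibniz]
    rw [deriv_prod (dd N a) univ (fun i : Fin N => ∏ j ∈ Ioi i, ((X j : PN N) - X i))
      (fun i => ∑ j ∈ Ioi i, ∑ t ∈ range (a + 1), (X j : PN N) ^ t * X i ^ (a - t))]
    · have : dd N a (C s) = 0 := by simp
      rw [this]; simp only [smul_eq_mul]; ring
    · intro i _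
      apply deriv_prod (dd N a) (Ioi i)
      intro j _
      rw [map_sub]
      simp only [dd, mkDerivation_X]
      have := (Commute.all (X j : PN N) (X i)).geom_sum₂_mul (a + 1)
      rw [← this, mul_comm]; simp
  rw [h, mul_comm _ (alt N), ← mul_smul_comm]
  congr 1
  set f : Fin N → Fin N → PN N := fun i j => ∑ t ∈ range (a + 1), (X j : PN N) ^ t * X i ^ (a - t)
    with hf
  have hsymm : ∀ i j, f i j = f j i := by
    intro i j
    rw [hf]; simp only
    rw [← sum_range_reflect]
    refine sum_congr rfl fun t ht => ?_
    simp only [mem_range] at ht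
    rw [show a + 1 - 1 - t = a - t by omega, show a - (a - t) = t by omega, mul_comm]
  have h1 : ∑ i, ∑ j, f i j = ∑ t ∈ range (a + 1), pw N t * pw N (a - t) := by
    simp only [hf, pw, sum_mul_sum]
    rw [sum_comm]
    have : ∀ j : Fin N, ∑ i : Fin N, ∑ t ∈ range (a + 1), (X j : PN N) ^ t * X i ^ (a - t) =
      ∑ t ∈ range (a + 1), ∑ i : Fin N, (X j : PN N) ^ t * X i ^ (a - t) := fun j => sum_comm
    simp only [this]
    rw [sum_comm]
  have h2 : ∑ i, f i i = ∑ t ∈ range (a + 1), pw N a := by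
    simp only [hf, pw]
    rw [sum_comm]
    refine sum_congr rfl fun t ht => sum_congr rfl fun i _ => ?_
    simp only [mem_range] at ht
    rw [← pow_add]; congr 1; omega
  rw [sum_sub_distrib, ← h1, ← h2]
  have h3 : ∀ i, ∑ j, f i j = ∑ j ∈ Ioi i, f i j + ∑ j ∈ Iio i, f i j + f i i := by
    intro i
    have : (univ : Finset (Fin N)) = insert i (Ioi i ∪ Iio i) := by
      ext j; simp only [mem_univ, mem_insert, mem_union, mem_Ioi, mem_Iio, true_iff]
      rcases lt_trichotomy i j with h | h | h
      · right; left; exact h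
      · left; exact h.symm
      · right; right; exact h
    rw [this, sum_insert (by simp), sum_union, add_comm]
    rw [Finset.disjoint_left]; intro j; simp; intro h; exact h.le
  simp only [h3, sum_add_distrib]
  have h4 : ∑ i, ∑ j ∈ Iio i, f i j = ∑ i, ∑ j ∈ Ioi i, f i j := by
    clear_value f
    rw [sum_sigma', sum_sigma']
    apply Finset.sum_bij' (fun x _ => (⟨x.2, x.1⟩ : Σ _ : Fin N, Fin N))
      (fun x _ => (⟨x.2, x.1⟩ : Σ _ : Fin N, Fin N))
    · rintro ⟨i, t⟩ hi; simpa using hi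
    · rintro ⟨i, t⟩ hi; simpa using hi
    · rintro ⟨i, t⟩ hi; simp
    · rintro ⟨i, t⟩ hi; simp
    · rintro ⟨i, t⟩ hi; exact hsymm _ _
  rw [h4, two_smul]; ring

lemma dd_ev (N a : ℕ) (g : Lam) : dd N a (ev N g) = ev N (V a g) := by
  induction g using lam_ind with
  | h1 => simp [V_one]
  | hs c g h => rw [Derivation.map_smul, map_smul, Derivation.map_smul, map_smul, h]
  | ha f g hf hg => simp only [map_add, hf, hg]
  | hX b g h =>
    rw [V_mul, map_mul (ev N), map_add (ev N), map_mul (ev N), map_smul (ev N), map_mul (ev N), Derivation.leibniz, h, ev_X, ev_X]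
    have : dd N a (pw N b) = (b : ℝ) • pw N (a + b) := by
      rw [dd_eq]; simp only [th_pw]; simp only [pw, smul_sum, mul_smul_comm, pow_add]
    rw [this]
    simp only [smul_eq_mul, mul_smul_comm]
    rw [mul_comm (ev N g)]

lemma Dop_pw (N a : ℕ) (F : PN N) : Dop N (pw N a * F) = pw N a * Dop N F +
    (2 * a : ℝ) • dd N a F + ((a : ℝ) ^ 2 - (2 * N - 1) * a) • (pw N a * F) := by
  rw [Dop_apply, Dop_apply, dd_eq]
  have h1 : ∀ (i : Fin N) (F : PN N), th i (pw N a * F) = pw N a * th i F + (a : ℝ) • (X i ^ a * F) := by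
    intro i F; rw [Derivation.leibniz, th_pw]; simp only [smul_eq_mul, mul_smul_comm]
    rw [mul_comm F]
  have h2 : ∀ i : Fin N, th i (X i ^ a * F) = X i ^ a * th i F + (a : ℝ) • (X i ^ a * F) := by
    intro i; rw [Derivation.leibniz, th_pow, if_pos rfl]
    simp only [smul_eq_mul, mul_smul_comm]
    rw [mul_comm F]
  simp only [h1, h2, map_add, Derivation.map_smul, smul_add, sum_add_distrib, ← smul_sum, ← mul_sum, smul_smul]
  have h3 : ∑ i : Fin N, ((X i : PN N) ^ a * F) = pw N a * F := by rw [pw, sum_mul]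
  rw [h3]
  simp only [mul_add, mul_sub, mul_smul_comm]
  module

lemma Dop_ev (N : ℕ) (g : Lam) : Dop N (ev N g * alt N) = ev N (D2 g) * alt N := by
  induction g using lam_ind with
  | h1 => simp [D2_one, Dop_alt]
  | hs c g h => simp only [map_smul, h, smul_mul_assoc]
  | ha f g hf hg => simp only [map_add, hf, hg, add_mul]
  | hX a g h =>
    rw [map_mul (ev N), ev_X, mul_assoc, Dop_pw, h, D2_mul, Derivation.leibniz, dd_ev]
    simp only [map_add, map_mul, map_smul, ev_X, smul_eq_mul]
    have h2 := dd_alt N a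
    rcases Nat.eq_zero_or_pos a with rfl | ha
    · simp; ring
    have h5 : ∑ t ∈ range (a + 1), (pw N t * pw N (a - t) - pw N a) =
        ev N (sp a) + (2 * (N:ℝ) - (a + 1)) • pw N a := by
      rw [sum_sub_distrib, sum_range_succ, sum_range_eq_add_Ico _ ha]
      have p0 : pw N 0 = (N : PN N) := by simp [pw]
      simp only [p0, Nat.sub_self, Nat.sub_zero, sp, map_sum, map_mul, ev_X]
      rw [sub_smul, mul_smul, add_smul, Nat.cast_smul_eq_nsmul, Nat.cast_smul_eq_nsmul,
        two_smul]
      simp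
      ring
    rw [h5] at h2
    have h6 : (2 * a : ℝ) • (ev N g * dd N a (alt N)) =
      (a : ℝ) • (ev N g * ((ev N (sp a) + (2 * (N:ℝ) - (a + 1)) • pw N a) * alt N)) := by
      rw [← h2, mul_smul_comm, smul_smul, mul_comm 2 (a:ℝ)]
    rw [smul_add, h6]
    have h7 : (ev N g * ((ev N (sp a) + (2 * (N:ℝ) - (a + 1)) • pw N a) * alt N)) =
      ev N (sp a) * ev N g * alt N + (2 * (N:ℝ) - (a + 1)) • (pw N a * (ev N g * alt N)) := by
      simp only [add_mul, mul_add, smul_mul_assoc, mul_smul_comm]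
      congr 1
      · ring
      · congr 1; ring
    rw [h7, mul_comm (alt N)]
    simp only [add_mul, smul_mul_assoc]
    rw [mul_assoc (pw N a)]
    module

/-- the coefficient functional -/
def phi {N : ℕ} (u : Fin N →₀ ℕ) : Lam →ₗ[ℝ] ℝ :=
  (lcoeff ℝ u) ∘ₗ (LinearMap.mulRight ℝ (alt N)) ∘ₗ (ev N).toLinearMap

lemma phi_apply {N : ℕ} (u : Fin N →₀ ℕ) (g : Lam) : phi u g = coeff u (ev N g * alt N) := rfl

lemma phi_D2 {N : ℕ} (u : Fin N →₀ ℕ) (g : Lam) : phi u (D2 g) = qq u * phi u g := by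
  rw [phi_apply, phi_apply, ← Dop_ev, coeff_Dop]

lemma phi_branch {N : ℕ} (u : Fin N →₀ ℕ) (g : Lam) :
    phi u (X 1 * g) = ∑ i, if i ∈ u.support then phi (u - Finsupp.single i 1) g else 0 := by
  rw [phi_apply, map_mul, ev_X, pw, mul_assoc, sum_mul, coeff_sum]
  refine sum_congr rfl fun i _ => ?_
  rw [pow_one, coeff_X_mul']; rfl

lemma qq_sub {N : ℕ} (u : Fin N →₀ ℕ) (i : Fin N) (h : i ∈ u.support) :
    qq u - qq (u - Finsupp.single i 1) = 2 * ((u i : ℝ) - N) := by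
  have h1 : 1 ≤ u i := by simp at h; omega
  have e1 : ∀ (f : Fin N → ℝ), ∑ j, f j = f i + ∑ j ∈ univ.erase i, f j :=
    fun f => (add_sum_erase univ f (mem_univ i)).symm
  simp only [qq]
  simp only [e1]
  have e2 : ∀ j ∈ univ.erase i, (u - Finsupp.single i 1 : Fin N →₀ ℕ) j = u j := by
    intro j hj
    simp only [mem_erase] at hj
    simp [hj.1]
  have e4 : ∑ j ∈ univ.erase i, (((u - Finsupp.single i 1 : Fin N →₀ ℕ) j : ℕ) : ℝ) ^ 2 =
      ∑ j ∈ univ.erase i, (u j : ℝ) ^ 2 := sum_congr rfl fun j hj => by rw [e2 j hj]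
  have e5 : ∑ j ∈ univ.erase i, (((u - Finsupp.single i 1 : Fin N →₀ ℕ) j : ℕ) : ℝ) =
      ∑ j ∈ univ.erase i, (u j : ℝ) := sum_congr rfl fun j hj => by rw [e2 j hj]
  rw [e4, e5]
  have e3 : (((u - Finsupp.single i 1 : Fin N →₀ ℕ) i : ℕ) : ℝ) = (u i : ℝ) - 1 := by
    simp [Nat.cast_sub h1]
  rw [e3]; ring

lemma M_single_one (g : Lam) : M (Finsupp.single 1 g) = Finsupp.single 1 (D2 g) := by
  rw [M_single]; simp

lemma phi_JM {N : ℕ} (u : Fin N →₀ ℕ) (q : ℕ) (g : Lam) :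
    phi u (eps ((J ^ q) (Finsupp.single 1 g))) =
    ∑ i, if i ∈ u.support then ((u i : ℝ) - N) ^ q * phi (u - Finsupp.single i 1) g else 0 := by
  induction q generalizing g with
  | zero =>
    rw [pow_zero, Module.End.one_apply, eps_single, phi_branch]
    simp
  | succ q ih =>
    have hM : ∀ q, M ((J ^ q) (Finsupp.single 1 g)) = (J ^ q) (Finsupp.single 1 (D2 g)) := by
      intro q
      induction q with
      | zero => simp [M_single_one]
      | succ q ih => rw [pow_succ', Module.End.mul_apply, Module.End.mul_apply, MJ_comm, ih]
    have h1 := congrArg (phi u) (eps_total ((J ^ q) (Finsupp.single 1 g)))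
    rw [phi_D2, hM, map_add, map_add, ih, ih, two_smul, map_add, map_add, ← Module.End.mul_apply,
      ← pow_succ'] at h1
    have h2 : 2 * phi u (eps ((J ^ (q + 1)) (Finsupp.single 1 g))) =
      2 * ∑ i, if i ∈ u.support then
        ((u i : ℝ) - N) ^ (q + 1) * phi (u - Finsupp.single i 1) g else 0 := by
      have : 2 * phi u (eps ((J ^ (q + 1)) (Finsupp.single 1 g))) =
        qq u * (∑ i, if i ∈ u.support then
        ((u i : ℝ) - N) ^ q * phi (u - Finsupp.single i 1) g else 0) -
        ∑ i, if i ∈ u.support then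
        ((u i : ℝ) - N) ^ q * phi (u - Finsupp.single i 1) (D2 g) else 0 := by linarith
      rw [this, mul_sum, mul_sum, ← sum_sub_distrib]
      refine sum_congr rfl fun i _ => ?_
      split_ifs with h
      · rw [phi_D2, pow_succ]
        linear_combination (((u i : ℝ) - N) ^ q * phi (u - Finsupp.single i 1) g) * qq_sub u i h
      · simp
    linarith

end
end FM

namespace FM
open Finset MvPolynomial
noncomputable section

lemma rename_alt {N : ℕ} (σ : Equiv.Perm (Fin N)) :
    rename σ (alt N) = C (((Equiv.Perm.sign σ : ℤ)) : ℝ) * alt N := by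
  rw [alt, map_sum, mul_sum, ← Equiv.sum_comp (Equiv.mulRight σ)]
  refine sum_congr rfl fun w _ => ?_
  rw [map_mul, rename_C, map_prod, ← mul_assoc, ← C_mul]
  congr 1
  · congr 1
    rw [Equiv.coe_mulRight, Equiv.Perm.sign_mul]
    push_cast
    ring
  · rw [← Equiv.prod_comp σ (fun i => (X i : PN N) ^ (N - 1 - ((w i : ℕ))))]
    refine prod_congr rfl fun i _ => ?_
    simp

lemma rename_ev {N : ℕ} (σ : Equiv.Perm (Fin N)) (g : Lam) :
    rename σ (ev N g) = ev N g := by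
  induction g using lam_ind with
  | h1 => simp
  | hs c g h => simp only [map_smul, h]
  | ha f g hf hg => simp only [map_add, hf, hg]
  | hX b g h =>
    rw [map_mul, map_mul, h, ev_X, pw, map_sum]
    congr 1
    simp only [map_pow, rename_X]
    exact Equiv.sum_comp σ (fun i => (X i : PN N) ^ b)

lemma phi_zero {N : ℕ} (u : Fin N →₀ ℕ) (i j : Fin N) (hij : i ≠ j) (h : u i = u j) (g : Lam) :
    phi u g = 0 := by
  have h1 : rename (Equiv.swap i j) (ev N g * alt N) = - (ev N g * alt N) := by
    rw [map_mul, rename_ev, rename_alt, Equiv.Perm.sign_swap hij]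
    simp
  have h2 := coeff_rename_mapDomain (Equiv.swap i j) (Equiv.swap i j).injective (ev N g * alt N) u
  have h3 : u.mapDomain (Equiv.swap i j) = u := by
    rw [← Finsupp.equivMapDomain_eq_mapDomain]
    ext k
    rw [Finsupp.equivMapDomain_apply, Equiv.symm_swap]
    rcases eq_or_ne k i with rfl | hk
    · rw [Equiv.swap_apply_left, h]
    rcases eq_or_ne k j with rfl | hk'
    · rw [Equiv.swap_apply_right, h]
    rw [Equiv.swap_apply_of_ne_of_ne hk hk']
  rw [h3, h1, coeff_neg] at h2
  rw [phi_apply]; linarith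

lemma strictMono_perm {N : ℕ} (w : Equiv.Perm (Fin N)) (h : StrictMono w) : w = 1 := by
  have h2 : (StrictMono.orderIsoOfSurjective w h w.surjective) = OrderIso.refl (Fin N) :=
    Subsingleton.elim _ _
  ext i
  have := congrArg (fun f : Fin N ≃o Fin N => f i) h2
  exact congrArg Fin.val (by simpa using this)

lemma phi_one_nonneg {N : ℕ} (u : Fin N →₀ ℕ) (hu : StrictAnti u) : 0 ≤ phi u 1 := by
  rw [phi_apply, map_one, one_mul, alt, coeff_sum]
  refine sum_nonneg fun w _ => ?_
  rw [mon_eq (fun i => N - 1 - ((w i : ℕ))), C_mul_monomial, coeff_monomial]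
  split_ifs with h
  · have : w = 1 := by
      apply strictMono_perm
      intro i j hij
      have := hu hij
      rw [← h] at this
      simp only [Finsupp.equivFunOnFinite_symm_apply_apply] at this
      rw [Fin.lt_def]; omega
    rw [this]; simp
  · exact le_rfl

lemma sub_anti {N : ℕ} (u : Fin N →₀ ℕ) (hu : StrictAnti u) (i : Fin N) (hi : i ∈ u.support) :
    StrictAnti (u - Finsupp.single i 1 : Fin N →₀ ℕ) ∨
      ∀ g, phi (u - Finsupp.single i 1) g = 0 := by
  by_cases hinj : Function.Injective (u - Finsupp.single i 1 : Fin N →₀ ℕ)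
  · left
    apply Antitone.strictAnti_of_injective _ hinj
    intro j k hjk
    rcases hjk.eq_or_lt with rfl | hjk
    · exact le_rfl
    have := hu hjk
    simp only [Finsupp.tsub_apply]
    have h1 : (Finsupp.single i 1 : Fin N →₀ ℕ) j ≤ 1 := by
      rw [Finsupp.single_apply]; split_ifs <;> simp
    omega
  · right
    intro g
    simp only [Function.Injective, not_forall] at hinj
    obtain ⟨a, b, hab, hne⟩ := hinj
    exact phi_zero _ a b hne hab g

lemma phi_pow_nonneg {N : ℕ} (t : ℕ) (u : Fin N →₀ ℕ) (hu : StrictAnti u) : 0 ≤ phi u (X 1 ^ t) := by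
  induction t generalizing u with
  | zero => rw [pow_zero]; exact phi_one_nonneg u hu
  | succ t ih =>
    rw [pow_succ', phi_branch]
    refine sum_nonneg fun i _ => ?_
    split_ifs with h
    · rcases sub_anti u hu i h with h1 | h1
      · exact ih _ h1
      · rw [h1]
    · exact le_rfl

def mon (k : Multiset ℕ) : Lam := (k.map (fun j => (X j : Lam))).prod

lemma mon_cons (a : ℕ) (k : Multiset ℕ) : mon (a ::ₘ k) = X a * mon k := by simp [mon]

lemma dl_mon (m : ℕ) (k : Multiset ℕ) : dl m (mon k) =
    (k.map (fun j : ℕ => (j : ℝ) • (Finsupp.single (m + j) (mon (k.erase j)) : MR))).sum := by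
  induction k using Multiset.induction_on with
  | empty => simp [mon]
  | cons a k ih =>
    rw [mon_cons, dl_mul, ih, Multiset.map_cons, Multiset.sum_cons, Multiset.erase_cons_head,
      add_comm, Multiset.smul_sum, Multiset.map_map]
    congr 2
    refine Multiset.map_congr rfl fun j hj => ?_
    rw [Multiset.erase_cons_tail_of_mem hj, mon_cons, Function.comp_apply, smul_comm (X a : Lam),
      Finsupp.smul_single, smul_eq_mul]

lemma J_expand (m r : ℕ) (k : Multiset ℕ) :
    J (Finsupp.single m (X 1 ^ (r + 1) * mon k)) =
    ((r : ℝ) + 1) • Finsupp.single (m + 1) (X 1 ^ r * mon k) +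
    (k.map (fun j : ℕ => (j : ℝ) •
      (Finsupp.single (m + j) (X 1 ^ (r + 1) * mon (k.erase j)) : MR))).sum +
    ∑ i ∈ Ico 1 m, Finsupp.single (m - i) (X 1 ^ (r + 1) * mon (i ::ₘ k)) := by
  rw [J_single, Derivation.leibniz, dl_mon]
  congr 1
  · rw [add_comm, Derivation.leibniz_pow]
    congr 1
    · have : dl m (X 1 : Lam) = Finsupp.single (m + 1) 1 := by
        have := dl_mul m 1 1; rw [dl_one] at this; simpa using this
      rw [this, ← Nat.cast_smul_eq_nsmul ℝ, smul_comm (mon k), Nat.cast_add, Nat.cast_one,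
        Nat.add_sub_cancel]
      congr 1
      rw [Finsupp.smul_single, Finsupp.smul_single, smul_eq_mul, smul_eq_mul, mul_one, mul_comm]
    · rw [Multiset.smul_sum, Multiset.map_map]
      congr 1
      refine Multiset.map_congr rfl fun j hj => ?_
      rw [Function.comp_apply, smul_comm _ (j:ℝ), Finsupp.smul_single, smul_eq_mul]
  · refine sum_congr rfl fun i _ => ?_
    rw [mon_cons]; congr 1; ring

lemma abs_msum_le (k : Multiset ℕ) (f g : ℕ → ℝ) (h : ∀ j ∈ k, |f j| ≤ g j) :
    |(k.map f).sum| ≤ (k.map g).sum := by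
  induction k using Multiset.induction_on with
  | empty => simp
  | cons a k ih =>
    rw [Multiset.map_cons, Multiset.sum_cons, Multiset.map_cons, Multiset.sum_cons]
    exact (abs_add_le _ _).trans (add_le_add (h a (Multiset.mem_cons_self _ _))
      (ih fun j hj => h j (Multiset.mem_cons_of_mem hj)))

lemma main_bound {N : ℕ} (u0 : Fin N → ℕ) (R : ℝ) (hR0 : 0 ≤ R)
    (hR : ∀ u : Fin N →₀ ℕ, StrictAnti u → (∀ i, u i ≤ u0 i) → ∀ i ∈ u.support,
      StrictAnti (u - Finsupp.single i 1 : Fin N →₀ ℕ) → |(u i : ℝ) - N| ≤ R)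
    (om : ℕ → ℝ) (hom1 : om 1 = 1) (homn : ∀ j, 0 ≤ om j) (s0 r0 : ℕ)
    (hstep : ∀ m k, 1 ≤ m → (∀ j ∈ k, 1 ≤ j) → m + 1 + Multiset.sum k ≤ s0 →
      R * (om m * (k.map om).prod) +
      (k.map (fun j : ℕ => (j : ℝ) * (om (m + j) * ((k.erase j).map om).prod))).sum +
      ∑ i ∈ Ico 1 m, om (m - i) * (om i * (k.map om).prod) ≤
      (r0 + 1) * (om (m + 1) * (k.map om).prod)) :
    ∀ s, ∀ m k, 1 ≤ m → (∀ j ∈ k, 1 ≤ j) → m + Multiset.sum k = s → s ≤ s0 → ∀ r q : ℕ, r0 ≤ r →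
      ∀ u : Fin N →₀ ℕ, StrictAnti u → (∀ i, u i ≤ u0 i) →
      |phi u (eps ((J ^ q) (Finsupp.single m (X 1 ^ r * mon k))))| ≤
        phi u (X 1 ^ (s + r)) * (R ^ q * (om m * (k.map om).prod)) := by
  intro s
  induction s with
  | zero => intro m k hm; intros; omega
  | succ s ih =>
    intro m k hm hk hs hs0 r q hr u hu huu
    have hprod : ∀ k : Multiset ℕ, 0 ≤ (k.map om).prod := fun k =>
      Multiset.prod_nonneg (by
        intro x hx; obtain ⟨j, -, rfl⟩ := Multiset.mem_map.1 hx; exact homn j)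
    obtain ⟨m, rfl⟩ : ∃ m', m = m' + 1 := ⟨m - 1, by omega⟩
    rcases Nat.eq_zero_or_pos m with rfl | hm1
    · rw [zero_add, phi_JM, show s + 1 + r = (s + r) + 1 by ring, pow_succ', phi_branch, sum_mul]
      refine (abs_sum_le_sum_abs _ _).trans (sum_le_sum fun i _ => ?_)
      split_ifs with hi
      swap; · simp
      rcases sub_anti u hu i hi with h1 | h1
      swap; · simp [h1]
      rw [abs_mul, abs_pow]
      have hb := hR u hu huu i hi h1
      have hb2 : |phi (u - Finsupp.single i 1) (X 1 ^ r * mon k)| ≤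
          phi (u - Finsupp.single i 1) (X 1 ^ (s + r)) * (k.map om).prod := by
        induction k using Multiset.induction_on with
        | empty =>
          have : s = 0 := by simpa using hs.symm
          subst this
          simp only [mon, Multiset.map_zero, Multiset.prod_zero, mul_one, zero_add]
          rw [abs_of_nonneg (phi_pow_nonneg _ _ h1)]
        | cons a k _ =>
          have := ih a k (hk a (Multiset.mem_cons_self _ _))
            (fun j hj => hk j (Multiset.mem_cons_of_mem hj))
            (by rw [Multiset.sum_cons] at hs; omega) (by omega) r 0 hr _ h1
            (fun j => (by simp only [Finsupp.tsub_apply]; omega : _ ≤ u j).trans (huu j))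
          rw [pow_zero, Module.End.one_apply, eps_single, pow_zero, one_mul] at this
          rw [mon_cons, Multiset.map_cons, Multiset.prod_cons]
          convert this using 3; ring
      rw [hom1, one_mul]
      calc _ ≤ R ^ q * (phi (u - Finsupp.single i 1) (X 1 ^ (s + r)) * (k.map om).prod) := by
            gcongr
        _ = _ := by ring
    · have hJ := congrArg (fun x => phi u (eps ((J ^ q) x))) (J_expand m r k)
      simp only [map_add, map_smul, map_sum, map_multiset_sum, Multiset.map_map,
        Function.comp_def, smul_eq_mul] at hJ
      rw [← Module.End.mul_apply, ← pow_succ] at hJ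
      have b1 := ih m k hm1 hk (by omega) (by omega) (r + 1) (q + 1) (by omega) u hu huu
      rw [show s + (r + 1) = s + 1 + r by ring] at b1
      set d := phi u (X 1 ^ (s + 1 + r)) with hd
      have hd0 : 0 ≤ d := phi_pow_nonneg _ _ hu
      have b2 : ∀ j ∈ k, |(j : ℝ) * phi u (eps ((J ^ q)
          (Finsupp.single (m + j) (X 1 ^ (r + 1) * mon (k.erase j)))))| ≤
          (j : ℝ) * (d * (R ^ q * (om (m + j) * ((k.erase j).map om).prod))) := by
        intro j hj
        rw [abs_mul, abs_of_nonneg (Nat.cast_nonneg j)]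
        refine mul_le_mul_of_nonneg_left ?_ (Nat.cast_nonneg j)
        have hj1 := Multiset.cons_erase hj
        have hj2 := congrArg Multiset.sum hj1
        rw [Multiset.sum_cons] at hj2
        have := ih (m + j) (k.erase j) (by omega) (fun i hi => hk i (Multiset.mem_of_mem_erase hi))
          (by omega) (by omega) (r + 1) q (by omega) u hu huu
        rwa [show s + (r + 1) = s + 1 + r by ring] at this
      have b3 : ∀ i ∈ Ico 1 m, |phi u (eps ((J ^ q)
          (Finsupp.single (m - i) (X 1 ^ (r + 1) * mon (i ::ₘ k)))))| ≤
          (d * (R ^ q * (om (m - i) * (om i * (k.map om).prod)))) := by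
        intro i hi
        simp only [mem_Ico] at hi
        have := ih (m - i) (i ::ₘ k) (by omega)
          (fun j hj => by
            rcases Multiset.mem_cons.1 hj with rfl | hj
            · omega
            · exact hk j hj)
          (by rw [Multiset.sum_cons]; omega) (by omega) (r + 1) q (by omega) u hu huu
        rwa [show s + (r + 1) = s + 1 + r by ring, Multiset.map_cons, Multiset.prod_cons] at this
      have B2 := abs_msum_le k _ _ b2
      have B3 := (abs_sum_le_sum_abs _ _).trans (sum_le_sum b3)
      have hst := hstep m k hm1 hk (by omega)
      set T := phi u (eps ((J ^ q) (Finsupp.single (m + 1) (X 1 ^ r * mon k)))) with hT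
      have e2 : (k.map (fun j : ℕ => (j : ℝ) *
          (d * (R ^ q * (om (m + j) * ((k.erase j).map om).prod))))).sum =
          d * R ^ q *
          (k.map (fun j : ℕ => (j : ℝ) * (om (m + j) * ((k.erase j).map om).prod))).sum := by
        rw [← Multiset.sum_map_mul_left]
        congr 1
        refine Multiset.map_congr rfl fun j _ => ?_
        ring
      have e3 : ∑ i ∈ Ico 1 m, (d * (R ^ q * (om (m - i) * (om i * (k.map om).prod)))) =
          d * R ^ q * ∑ i ∈ Ico 1 m, om (m - i) * (om i * (k.map om).prod) := by
        rw [mul_sum]; refine sum_congr rfl fun i _ => ?_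
        ring
      rw [e2] at B2
      rw [e3] at B3
      have hdR : 0 ≤ d * R ^ q := by positivity
      have h4 : ((r : ℝ) + 1) * |T| ≤ d * R ^ q * ((r0 + 1) * (om (m + 1) * (k.map om).prod)) := by
        refine le_trans ?_ (mul_le_mul_of_nonneg_left hst hdR)
        have : ((r : ℝ) + 1) * |T| = |((r : ℝ) + 1) * T| := by
          rw [abs_mul, abs_of_pos (by positivity : (0:ℝ) < (r:ℝ) + 1)]
        rw [this]
        have h5 : ((r : ℝ) + 1) * T = phi u (eps ((J ^ (q + 1))
          (Finsupp.single m (X 1 ^ (r + 1) * mon k)))) -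
          (k.map (fun j : ℕ => (j : ℝ) * phi u (eps ((J ^ q)
          (Finsupp.single (m + j) (X 1 ^ (r + 1) * mon (k.erase j))))))).sum -
          ∑ i ∈ Ico 1 m, phi u (eps ((J ^ q)
          (Finsupp.single (m - i) (X 1 ^ (r + 1) * mon (i ::ₘ k))))) := by linarith
        rw [h5]
        refine (abs_sub _ _).trans ?_
        have h6 := abs_sub (phi u (eps ((J ^ (q + 1))
          (Finsupp.single m (X 1 ^ (r + 1) * mon k)))))
          (k.map (fun j : ℕ => (j : ℝ) * phi u (eps ((J ^ q)
          (Finsupp.single (m + j) (X 1 ^ (r + 1) * mon (k.erase j))))))).sum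
        have h7 : d * (R ^ (q + 1) * (om m * (k.map om).prod)) =
          d * R ^ q * (R * (om m * (k.map om).prod)) := by ring
        rw [h7] at b1
        rw [mul_add, mul_add]
        linarith
      have hr' : ((r0 : ℝ) + 1) ≤ (r : ℝ) + 1 := by exact_mod_cast Nat.succ_le_succ hr
      have h8 : ((r : ℝ) + 1) * |T| ≤ ((r : ℝ) + 1) *
          (d * (R ^ q * (om (m + 1) * (k.map om).prod))) := by
        refine h4.trans ?_
        have h9 : 0 ≤ d * R ^ q * (om (m + 1) * (k.map om).prod) :=
          mul_nonneg hdR (mul_nonneg (homn _) (hprod _))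
        nlinarith
      exact le_of_mul_le_mul_left h8 (by positivity)

end
end FM

namespace FM
open Finset MvPolynomial
noncomputable section

def ww (j : ℕ) : ℝ := (j : ℝ) ^ (-(2/3) : ℝ)

lemma ww_nonneg (j : ℕ) : 0 ≤ ww j := Real.rpow_nonneg (Nat.cast_nonneg _) _
lemma ww_pos (j : ℕ) (h : 1 ≤ j) : 0 < ww j := Real.rpow_pos_of_pos (by exact_mod_cast h) _
lemma ww_one : ww 1 = 1 := by simp [ww]

lemma ww_anti {i j : ℕ} (hi : 1 ≤ i) (h : i ≤ j) : ww j ≤ ww i :=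
  Real.rpow_le_rpow_of_nonpos (by exact_mod_cast hi) (by exact_mod_cast h) (by norm_num)

lemma ww_le_one {j : ℕ} (hj : 1 ≤ j) : ww j ≤ 1 := ww_one ▸ ww_anti le_rfl hj

lemma ww_scale {i j c : ℕ} (hj : 1 ≤ j) (hc : 1 ≤ c) (h : j ≤ c * i) : ww i ≤ c * ww j := by
  have h1 : ww (c * i) ≤ ww j := ww_anti hj h
  have h2 : ww (c * i) = (c : ℝ) ^ (-(2/3) : ℝ) * ww i := by
    simp only [ww]; push_cast
    rw [Real.mul_rpow (Nat.cast_nonneg _) (Nat.cast_nonneg _)]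
  have hc' : (1:ℝ) ≤ c := by exact_mod_cast hc
  have h3 : (1:ℝ) ≤ c * (c : ℝ) ^ (-(2/3) : ℝ) := by
    nth_rw 1 [← Real.rpow_one (c:ℝ)]
    rw [← Real.rpow_add (by linarith)]
    exact Real.one_le_rpow hc' (by norm_num)
  have := ww_nonneg i
  calc ww i ≤ (c * (c : ℝ) ^ (-(2/3) : ℝ)) * ww i := le_mul_of_one_le_left this h3
    _ = c * ww (c * i) := by rw [h2]; ring
    _ ≤ c * ww j := by gcongr

lemma sum_ww (k : ℕ) : ∑ i ∈ Ico 1 (k + 1), ww i ≤ 3 * (k : ℝ) ^ ((1:ℝ)/3) := by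
  induction k with
  | zero => simp
  | succ k ih =>
    rw [sum_Ico_succ_top (by omega)]
    have hk : (0:ℝ) ≤ k := Nat.cast_nonneg _
    set a : ℝ := ((k + 1 : ℕ) : ℝ) ^ ((1:ℝ)/3) with ha
    set b : ℝ := (k : ℝ) ^ ((1:ℝ)/3) with hb
    have ha0 : 0 < a := Real.rpow_pos_of_pos (by positivity) _
    have hb0 : 0 ≤ b := Real.rpow_nonneg hk _
    have hab : b ≤ a := Real.rpow_le_rpow hk (by push_cast; linarith) (by norm_num)
    have ha3 : a ^ 3 = k + 1 := by
      rw [ha, ← Real.rpow_natCast, ← Real.rpow_mul (by positivity)]; norm_num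
    have hb3 : b ^ 3 = k := by
      rw [hb, ← Real.rpow_natCast, ← Real.rpow_mul (by positivity)]; norm_num
    have hw : ww (k + 1) = (a ^ 2)⁻¹ := by
      rw [ha, ← Real.rpow_natCast, ← Real.rpow_mul (by positivity), ← Real.rpow_neg (by positivity),
        ww]
      norm_num
    have : (a ^ 2)⁻¹ ≤ 3 * (a - b) := by
      rw [inv_le_iff_one_le_mul₀ (by positivity)]
      nlinarith [mul_nonneg (sub_nonneg.2 hab) hb0, mul_nonneg (sub_nonneg.2 hab) ha0.le,
        mul_nonneg (mul_nonneg (sub_nonneg.2 hab) (sub_nonneg.2 hab)) hb0,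
        mul_nonneg (mul_nonneg (sub_nonneg.2 hab) (sub_nonneg.2 hab)) ha0.le]
    rw [hw]
    linarith

lemma conv_ww (m s : ℕ) (hm : 1 ≤ m) (hms : m ≤ s) :
    ∑ i ∈ Ico 1 m, ww (m - i) * ww i ≤ 24 * (s : ℝ) ^ ((1:ℝ)/3) * ww (m + 1) := by
  have h1 : ∀ i ∈ Ico 1 m, ww (m - i) * ww i ≤ 4 * ww (m + 1) * (ww (m - i) + ww i) := by
    intro i hi
    simp only [mem_Ico] at hi
    have p1 := ww_nonneg i
    have p2 := ww_nonneg (m - i)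
    have p3 := ww_nonneg (m + 1)
    rcases le_total (m - i) i with h | h
    · have := ww_scale (i := i) (j := m + 1) (c := 4) (by omega) (by omega) (by omega)
      push_cast at this
      nlinarith
    · have := ww_scale (i := m - i) (j := m + 1) (c := 4) (by omega) (by omega) (by omega)
      push_cast at this
      nlinarith
  refine (sum_le_sum h1).trans ?_
  rw [← mul_sum, sum_add_distrib]
  have h2 : ∑ i ∈ Ico 1 m, ww (m - i) = ∑ i ∈ Ico 1 m, ww i := by
    apply Finset.sum_bij' (fun i _ => m - i) (fun i _ => m - i)
    · intro i hi; simp at hi ⊢; omega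
    · intro i hi; simp at hi ⊢; omega
    · intro i hi; simp at hi ⊢; omega
    · intro i hi; simp at hi ⊢; omega
    · intro i hi; rfl
  rw [h2]
  have h3 : ∑ i ∈ Ico 1 m, ww i ≤ 3 * (s : ℝ) ^ ((1:ℝ)/3) := by
    obtain ⟨k, rfl⟩ : ∃ k, m = k + 1 := ⟨m - 1, by omega⟩
    refine (sum_ww k).trans ?_
    gcongr
    omega
  have p3 := ww_nonneg (m + 1)
  nlinarith

/-- the weight -/
def omg (η : ℝ) (j : ℕ) : ℝ := ww j * η ^ (j - 1)

lemma step_ok (n s0 : ℕ) (C E : ℝ) (hn : 1 ≤ n) (hC : 0 < C) (hE1 : 12 * C ≤ E)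
    (hE2 : 144 * (s0 : ℝ) ^ ((1:ℝ)/3) ≤ E ^ 2) (hs2 : 2 * s0 ≤ n)
    (hs3 : 6 * ((s0 : ℝ) ^ ((2:ℝ)/3) * s0) ≤ n) (m : ℕ) (k : Multiset ℕ) (hm : 1 ≤ m)
    (hk : ∀ j ∈ k, 1 ≤ j) (hs : m + 1 + k.sum ≤ s0) :
    let om := omg (E / Real.sqrt n);
      (C * Real.sqrt n) * (om m * (k.map om).prod) +
      (k.map (fun j : ℕ => (j : ℝ) * (om (m + j) * ((k.erase j).map om).prod))).sum +
      ∑ i ∈ Ico 1 m, om (m - i) * (om i * (k.map om).prod) ≤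
      ((n - s0 : ℕ) + 1) * (om (m + 1) * (k.map om).prod) := by
  intro om
  have hE0 : 0 < E := by linarith
  have hn0 : (0:ℝ) < n := by exact_mod_cast hn
  set y := Real.sqrt n with hy
  have hy0 : 0 < y := Real.sqrt_pos.2 hn0
  have hyy : y * y = n := Real.mul_self_sqrt hn0.le
  set η := E / y with hη
  have hη0 : 0 < η := by positivity
  have hom : ∀ j, 0 ≤ om j := fun j => mul_nonneg (ww_nonneg j) (by positivity)
  have hprod : ∀ k : Multiset ℕ, 0 ≤ (k.map om).prod := fun k =>
    Multiset.prod_nonneg (by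
      intro x hx; obtain ⟨j, -, rfl⟩ := Multiset.mem_map.1 hx; exact hom j)
  set P := (k.map om).prod with hP
  have hP0 : 0 ≤ P := hprod k
  have hr : (n : ℝ) / 2 ≤ ((n - s0 : ℕ) : ℝ) + 1 := by
    rw [Nat.cast_sub (by omega)]
    have : 2 * (s0 : ℝ) ≤ n := by exact_mod_cast hs2
    linarith
  set Q := om (m + 1) * P with hQ
  have hQ0 : 0 ≤ Q := mul_nonneg (hom _) hP0
  have hom1 : om (m + 1) = ww (m + 1) * η ^ m := rfl
  have hyη : y * η = E := by rw [hη]; field_simp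
  -- (a)
  have ta : (C * y) * (om m * P) ≤ n / 6 * Q := by
    rw [hQ, ← mul_assoc, ← mul_assoc]
    refine mul_le_mul_of_nonneg_right ?_ hP0
    rw [hom1]
    have : om m = ww m * η ^ (m - 1) := rfl
    rw [this]
    have e : η ^ m = η * η ^ (m - 1) := by
      rw [← pow_succ']; congr 1; omega
    rw [e]
    have hw := ww_scale (i := m) (j := m + 1) (c := 2) (by omega) (by omega) (by omega)
    push_cast at hw
    have hw0 := ww_nonneg (m + 1)
    have hz : 0 ≤ η ^ (m - 1) := by positivity
    have h1 : C * y * ww m ≤ n / 6 * (ww (m + 1) * η) := by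
      calc C * y * ww m ≤ C * y * (2 * ww (m + 1)) := by gcongr
        _ = (12 * C) * (y * ww (m + 1) / 6) := by ring
        _ ≤ E * (y * ww (m + 1) / 6) := by gcongr
        _ = n / 6 * (ww (m + 1) * η) := by rw [← hyη, ← hyy]; ring
    calc C * y * (ww m * η ^ (m - 1)) = (C * y * ww m) * η ^ (m - 1) := by ring
      _ ≤ (n / 6 * (ww (m + 1) * η)) * η ^ (m - 1) := by gcongr
      _ = _ := by ring
  -- (b)
  have tb : (k.map (fun j : ℕ => (j : ℝ) * (om (m + j) * ((k.erase j).map om).prod))).sum ≤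
      n / 6 * Q := by
    have h1 : ∀ j ∈ k, (j : ℝ) * (om (m + j) * ((k.erase j).map om).prod) ≤
        (j : ℝ) * ((s0 : ℝ) ^ ((2:ℝ)/3) * Q) := by
      intro j hj
      refine mul_le_mul_of_nonneg_left ?_ (Nat.cast_nonneg j)
      have hj1 := hk j hj
      have hjs : j ≤ s0 := (Multiset.le_sum_of_mem hj).trans (by omega)
      have hPj : P = om j * ((k.erase j).map om).prod := by
        rw [hP]; nth_rw 1 [← Multiset.cons_erase hj]; simp
      rw [hQ, hPj]
      have hpp := hprod (k.erase j)
      have hj0 : (0:ℝ) < j := by exact_mod_cast hj1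
      have h2 : om (m + j) ≤ (s0 : ℝ) ^ ((2:ℝ)/3) * (om (m + 1) * om j) := by
        have e1 : om (m + j) = ww (m + j) * (η ^ m * η ^ (j - 1)) := by
          simp only [om, omg]; rw [← pow_add]; congr 2; omega
        have e2 : om j = ww j * η ^ (j - 1) := rfl
        rw [e1, e2, hom1]
        have h3 : ww (m + j) ≤ ww (m + 1) := ww_anti (by omega) (by omega)
        have h4 : 1 ≤ (s0 : ℝ) ^ ((2:ℝ)/3) * ww j := by
          have : (1:ℝ) = (j : ℝ) ^ ((2:ℝ)/3) * ww j := by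
            rw [ww, ← Real.rpow_add hj0]; norm_num
          rw [this]
          refine mul_le_mul_of_nonneg_right ?_ (ww_nonneg j)
          exact Real.rpow_le_rpow hj0.le (by exact_mod_cast hjs) (by norm_num)
        have h5 := ww_nonneg (m + 1)
        calc ww (m + j) * (η ^ m * η ^ (j - 1)) ≤ (ww (m + 1) * 1) * (η ^ m * η ^ (j - 1)) := by
              rw [mul_one]; gcongr
          _ ≤ (ww (m + 1) * ((s0 : ℝ) ^ ((2:ℝ)/3) * ww j)) * (η ^ m * η ^ (j - 1)) := by gcongr
          _ = _ := by ring
      calc _ ≤ ((s0 : ℝ) ^ ((2:ℝ)/3) * (om (m + 1) * om j)) * ((k.erase j).map om).prod := by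
            gcongr
        _ = _ := by ring
    refine (Multiset.sum_map_le_sum_map _ _ h1).trans ?_
    rw [Multiset.sum_map_mul_right]
    have e : (k.map (fun j : ℕ => (j : ℝ))).sum = ((k.sum : ℕ) : ℝ) := by
      simp
    rw [e, ← mul_assoc]
    refine mul_le_mul_of_nonneg_right ?_ hQ0
    have : ((k.sum : ℕ) : ℝ) ≤ s0 := by exact_mod_cast (by omega : k.sum ≤ s0)
    have h0 : 0 ≤ (s0 : ℝ) ^ ((2:ℝ)/3) := by positivity
    nlinarith
  -- (c)
  have tc : ∑ i ∈ Ico 1 m, om (m - i) * (om i * P) ≤ n / 6 * Q := by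
    have h1 : ∀ i ∈ Ico 1 m, om (m - i) * (om i * P) = (ww (m - i) * ww i) * (η ^ (m - 2) * P) := by
      intro i hi
      simp only [mem_Ico] at hi
      simp only [om, omg]
      have : η ^ (m - 2) = η ^ (m - i - 1) * η ^ (i - 1) := by
        rw [← pow_add]; congr 1; omega
      rw [this]; ring
    rw [sum_congr rfl h1, ← sum_mul]
    rcases Nat.lt_or_ge m 2 with hm2 | hm2
    · have : m = 1 := by omega
      subst this
      simp; positivity
    have h2 := conv_ww m s0 hm (by omega)
    have hz : 0 ≤ η ^ (m - 2) * P := by positivity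
    have h5 := ww_nonneg (m + 1)
    have e : η ^ m = η * η * η ^ (m - 2) := by
      rw [← pow_two, ← pow_add]; congr 1; omega
    calc _ ≤ (24 * (s0 : ℝ) ^ ((1:ℝ)/3) * ww (m + 1)) * (η ^ (m - 2) * P) := by gcongr
      _ = (144 * (s0 : ℝ) ^ ((1:ℝ)/3)) * (ww (m + 1) * (η ^ (m - 2) * P) / 6) := by ring
      _ ≤ E ^ 2 * (ww (m + 1) * (η ^ (m - 2) * P) / 6) := by gcongr
      _ = n / 6 * Q := by rw [hQ, hom1, e, ← hyη, ← hyy]; ring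
  calc _ ≤ n / 6 * Q + n / 6 * Q + n / 6 * Q := by linarith
    _ = n / 2 * Q := by ring
    _ ≤ _ := by gcongr

def uu (n : ℕ) (lam : Fin n → ℕ) : Fin n →₀ ℕ :=
  Finsupp.equivFunOnFinite.symm fun i : Fin n => lam i + (n - 1 - (i : ℕ))

lemma anti_ge {n : ℕ} (u : Fin n → ℕ) (hu : StrictAnti u) (i : Fin n) : n - 1 - (i : ℕ) ≤ u i := by
  have : ∀ d : ℕ, ∀ i : Fin n, n - 1 - (i : ℕ) = d → d ≤ u i := by
    intro d
    induction d with
    | zero => intros; omega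
    | succ d ih =>
      intro i hi
      have h1 := ih ⟨i + 1, by omega⟩ (by simp only; omega)
      have h2 := hu (show i < ⟨i + 1, by omega⟩ by rw [Fin.lt_def]; simp)
      omega
  exact this _ i rfl

lemma content_bound (n : ℕ) (lam : Fin n → ℕ) (R : ℝ)
    (hanti : ∀ i j : Fin n, i ≤ j → lam j ≤ lam i)
    (hrow : ((Finset.univ.filter fun i : Fin n => lam i ≠ 0).card : ℝ) ≤ R)
    (hcol : ∀ i : Fin n, (lam i : ℝ) ≤ R)
    (u : Fin n →₀ ℕ) (huu : ∀ i, u i ≤ uu n lam i)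
    (i : Fin n) (hi : i ∈ u.support) (hv : StrictAnti (u - Finsupp.single i 1 : Fin n →₀ ℕ)) :
    |(u i : ℝ) - n| ≤ R := by
  have h1 := anti_ge _ hv i
  have h2 := huu i
  have hi' : u i ≠ 0 := by simpa using hi
  simp only [Finsupp.tsub_apply, Finsupp.single_eq_same] at h1
  simp only [uu, Finsupp.equivFunOnFinite_symm_apply_apply] at h2
  have h3 : 1 ≤ lam i := by omega
  have h4 : (i : ℕ) + 1 ≤ (Finset.univ.filter fun i : Fin n => lam i ≠ 0).card := by
    have : (Finset.Iic i) ⊆ (Finset.univ.filter fun i : Fin n => lam i ≠ 0) := by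
      intro j hj
      simp only [mem_Iic] at hj
      have := hanti j i hj
      simp; omega
    have := card_le_card this
    rwa [Fin.card_Iic] at this
  have h5 : ((i : ℕ) : ℝ) + 1 ≤ R := le_trans (by exact_mod_cast h4) hrow
  have h6 := hcol i
  have h7 : (n : ℝ) ≤ u i + (i : ℕ) := by exact_mod_cast (by omega : n ≤ u i + i)
  have h8 : (u i : ℝ) ≤ lam i + n := by exact_mod_cast (by omega : u i ≤ lam i + n)
  rw [abs_le]; constructor <;> linarith

lemma uu_anti (n : ℕ) (lam : Fin n → ℕ) (hanti : ∀ i j : Fin n, i ≤ j → lam j ≤ lam i) :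
    StrictAnti (uu n lam) := by
  intro i j hij
  have := hanti i j hij.le
  simp only [uu, Finsupp.equivFunOnFinite_symm_apply_apply]
  rw [Fin.lt_def] at hij
  omega

lemma prod_omg_le (η : ℝ) (hη : 0 ≤ η) (k : Multiset ℕ) (hk : ∀ j ∈ k, 1 ≤ j) :
    (k.map (omg η)).prod ≤ η ^ (k.sum - k.card) ∧ k.card ≤ k.sum ∧ 0 ≤ (k.map (omg η)).prod := by
  induction k using Multiset.induction_on with
  | empty => simp
  | cons a k ih =>
    obtain ⟨h1, h2, h3⟩ := ih fun j hj => hk j (Multiset.mem_cons_of_mem hj)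
    have ha := hk a (Multiset.mem_cons_self _ _)
    simp only [Multiset.map_cons, Multiset.prod_cons, Multiset.sum_cons, Multiset.card_cons]
    have h4 : omg η a ≤ η ^ (a - 1) := by
      rw [omg]
      exact mul_le_of_le_one_left (by positivity) (ww_le_one ha)
    have h5 : 0 ≤ omg η a := mul_nonneg (ww_nonneg a) (by positivity)
    refine ⟨?_, by omega, by positivity⟩
    have : η ^ (a + k.sum - (k.card + 1)) = η ^ (a - 1) * η ^ (k.sum - k.card) := by
      rw [← pow_add]; congr 1; omega
    rw [this]
    gcongr

lemma phi_bound (n : ℕ) (hn : 1 ≤ n) (lam : Fin n → ℕ) (C E : ℝ) (hC : 0 < C)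
    (hanti : ∀ i j : Fin n, i ≤ j → lam j ≤ lam i)
    (hrow : ((Finset.univ.filter fun i : Fin n => lam i ≠ 0).card : ℝ) ≤ C * Real.sqrt n)
    (hcol : ∀ i : Fin n, (lam i : ℝ) ≤ C * Real.sqrt n)
    (k : Multiset ℕ) (hk : ∀ j ∈ k, 1 ≤ j) (hE1 : 12 * C ≤ E)
    (hE2 : 144 * (k.sum : ℝ) ^ ((1:ℝ)/3) ≤ E ^ 2) (hs2 : 2 * k.sum ≤ n)
    (hs3 : 6 * ((k.sum : ℝ) ^ ((2:ℝ)/3) * k.sum) ≤ n) (hk0 : k ≠ 0) :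
    |phi (uu n lam) (X 1 ^ (n - k.sum) * mon k)| ≤
      phi (uu n lam) (X 1 ^ n) * (E / Real.sqrt n) ^ (k.sum - k.card) := by
  have hη0 : 0 ≤ E / Real.sqrt n := div_nonneg (by linarith) (Real.sqrt_nonneg _)
  have hua := uu_anti n lam hanti
  have hb := main_bound (N := n) (uu n lam) (C * Real.sqrt n) (by positivity)
    (fun u _ huu i hi hv => content_bound n lam _ hanti hrow hcol u huu i hi hv)
    (omg (E / Real.sqrt n)) (by simp [omg, ww_one])
    (fun j => mul_nonneg (ww_nonneg j) (by positivity)) k.sum (n - k.sum)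
    (fun m k' hm hk' hs => step_ok n k.sum C E hn hC hE1 hE2 hs2 hs3 m k' hm hk' hs)
  obtain ⟨a, ha⟩ := Multiset.exists_mem_of_ne_zero hk0
  obtain ⟨k', rfl⟩ := Multiset.exists_cons_of_mem ha
  have := hb (a ::ₘ k').sum a k' (hk a ha) (fun j hj => hk j (Multiset.mem_cons_of_mem hj))
    (by simp) le_rfl (n - (a ::ₘ k').sum) 0 le_rfl (uu n lam) hua (fun _ => le_rfl)
  rw [pow_zero, Module.End.one_apply, eps_single, pow_zero, one_mul,
    show (a ::ₘ k').sum + (n - (a ::ₘ k').sum) = n by omega] at this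
  rw [mon_cons, mul_left_comm]
  refine this.trans (mul_le_mul_of_nonneg_left ?_ (phi_pow_nonneg _ _ hua))
  have h3 := (prod_omg_le (E / Real.sqrt n) hη0 (a ::ₘ k') hk).1
  rwa [Multiset.map_cons, Multiset.prod_cons] at h3

end
end FM

namespace FM
open Finset Equiv
noncomputable section

def plen {α : Type*} [Fintype α] [DecidableEq α] (f : Perm α) : ℕ := f.cycleType.sum - f.cycleType.card

lemma card_le_ct {α : Type*} [Fintype α] [DecidableEq α] (f : Perm α) :
    2 * f.cycleType.card ≤ f.cycleType.sum := by
  have := Multiset.card_nsmul_le_sum (s := f.cycleType) (a := 2)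
    (fun x hx => Perm.two_le_of_mem_cycleType hx)
  simpa [mul_comm] using this

lemma plen_mul {α : Type*} [Fintype α] [DecidableEq α] {f g : Perm α} (h : f.Disjoint g) :
    plen (f * g) = plen f + plen g := by
  have h1 := card_le_ct f
  have h2 := card_le_ct g
  simp only [plen, h.cycleType_mul, Multiset.sum_add, Multiset.card_add]
  omega

lemma plen_cycle {α : Type*} [Fintype α] [DecidableEq α] {f : Perm α} (h : f.IsCycle) :
    plen f = f.support.card - 1 := by
  simp [plen, h.cycleType]

lemma plen_swap_mul {α : Type*} [Fintype α] [DecidableEq α] (f : Perm α) (x : α) (hx : f x ≠ x) :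
    plen (swap x (f x) * f) + 1 = plen f := by
  have hc : (f.cycleOf x).IsCycle := Perm.isCycle_cycleOf f hx
  set c := f.cycleOf x with hcdef
  have hcx : c x = f x := Perm.cycleOf_apply_self f x
  have hmem : c ∈ f.cycleFactorsFinset := by
    rw [hcdef, Perm.cycleOf_mem_cycleFactorsFinset_iff, Perm.mem_support]; exact hx
  have hd : Perm.Disjoint (f * c⁻¹) c := Perm.disjoint_mul_inv_of_mem_cycleFactorsFinset hmem
  set g := f * c⁻¹ with hg
  have hf : f = c * g := by
    rw [← hd.commute.eq, hg]; simp
  have h1 : plen f = plen c + plen g := by rw [hf]; exact plen_mul hd.symm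
  have h2 : swap x (f x) * f = (swap x (c x) * c) * g := by
    rw [hcx, mul_assoc, ← hf]
  have hcx' : c x ≠ x := by rw [hcx]; exact hx
  by_cases hff : c (c x) = x
  · have h3 : c = swap x (c x) := hc.eq_swap_of_apply_apply_eq_self hcx' hff
    have h4 : swap x (c x) * c = 1 := by
      nth_rewrite 2 [h3]; simp
    have h5 : plen c = 1 := by
      rw [plen_cycle hc, h3, Perm.card_support_swap hcx'.symm]
    rw [h2, h4, one_mul, h1, h5, add_comm]
  · have h3 := hc.swap_mul hcx' hff
    have h4 := Perm.support_swap_mul_eq c x hff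
    have h5 : Perm.Disjoint (swap x (c x) * c) g := by
      rw [Perm.disjoint_iff_disjoint_support, h4]
      exact (Perm.disjoint_iff_disjoint_support.1 hd.symm).mono_left sdiff_subset
    have hxs : x ∈ c.support := Perm.mem_support.2 hcx'
    have h6 : (c.support \ {x}).card = c.support.card - 1 := by
      rw [card_sdiff_of_subset (by simpa using hxs)]; simp
    have h7 := h3.two_le_card_support
    rw [h2, plen_mul h5, h1, plen_cycle h3, plen_cycle hc, h4, h6]
    rw [h4, h6] at h7
    omega

lemma plen_extend {α β : Type*} [Fintype α] [DecidableEq α] [Fintype β] [DecidableEq β]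
    {p : β → Prop} [DecidablePred p] (f : α ≃ Subtype p) (g : Perm α) :
    plen (g.extendDomain f) = plen g := by
  simp only [plen, Perm.cycleType_extendDomain]

lemma plen_optionCongr {α : Type*} [Fintype α] [DecidableEq α] (g : Perm α) :
    plen (optionCongr g) = plen g := by
  rw [← plen_extend (optionIsSomeEquiv α).symm g]
  congr 1
  ext1 x
  cases x with
  | none => rw [Perm.extendDomain_apply_not_subtype _ _ (by simp)]; simp
  | some a =>
    have := Perm.extendDomain_apply_image g (optionIsSomeEquiv α).symm a
    simpa using this.symm

lemma plen_permCongr {α β : Type*} [Fintype α] [DecidableEq α] [Fintype β] [DecidableEq β]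
    (e : α ≃ β) (g : Perm α) : plen (e.permCongr g) = plen g := by
  rw [← plen_extend (p := fun _ : β => True) (e.trans (Equiv.Set.univ β).symm) g]
  congr 1

lemma gen_option {α : Type*} [Fintype α] [DecidableEq α] (x : ℝ) :
    ∑ f : Perm (Option α), x ^ plen f = (1 + Fintype.card α * x) * ∑ f : Perm α, x ^ plen f := by
  rw [← Equiv.sum_comp (Perm.decomposeOption (α := α)).symm, Fintype.sum_prod_type,
    Fintype.sum_option, add_mul, one_mul]
  congr 1
  · refine sum_congr rfl fun σ _ => ?_
    rw [Perm.decomposeOption_symm_apply]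
    change x ^ plen (swap none none * optionCongr σ) = _
    rw [swap_self, ← Perm.one_def, one_mul, plen_optionCongr]
  · have : ∀ a : α, ∑ σ : Perm α, x ^ plen (Perm.decomposeOption.symm (some a, σ)) =
        x * ∑ σ : Perm α, x ^ plen σ := by
      intro a
      rw [mul_sum]
      refine sum_congr rfl fun σ _ => ?_
      rw [Perm.decomposeOption_symm_apply]
      set f := swap none (some a) * optionCongr σ with hf
      have h1 : f none = some a := by simp [hf]
      have h2 := plen_swap_mul f none (by rw [h1]; simp)
      rw [h1, hf, ← mul_assoc, swap_mul_self, one_mul, plen_optionCongr, ← hf] at h2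
      change x ^ plen f = _
      rw [← h2, pow_succ']
    rw [sum_congr rfl fun a _ => this a, sum_const, card_univ, nsmul_eq_mul]
    ring

lemma gen_fin (x : ℝ) (n : ℕ) :
    ∑ f : Perm (Fin n), x ^ plen f = ∏ i ∈ range n, (1 + i * x) := by
  induction n with
  | zero => simp [plen]
  | succ n ih =>
    rw [prod_range_succ, ← ih, mul_comm]
    have := gen_option (α := Fin n) x
    rw [Fintype.card_fin] at this
    rw [← this, ← Equiv.sum_comp (finSuccEquiv n).permCongr]
    simp only [plen_permCongr]

lemma gen_le (x : ℝ) (hx : 0 ≤ x) (n : ℕ) :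
    ∑ f : Perm (Fin n), x ^ plen f ≤ Real.exp (n ^ 2 * x) := by
  rw [gen_fin]
  calc ∏ i ∈ range n, (1 + i * x) ≤ ∏ i ∈ range n, Real.exp (n * x) := by
        refine prod_le_prod (fun i _ => by positivity) fun i hi => ?_
        have : (i : ℝ) * x ≤ n * x := by
          have : (i : ℝ) ≤ n := by exact_mod_cast (mem_range.1 hi).le
          gcongr
        have h2 := Real.add_one_le_exp (n * x)
        linarith
    _ = _ := by
        rw [prod_const, card_range, ← Real.exp_nat_mul]; congr 1; ring

lemma count_le (n l : ℕ) (hn : 1 ≤ n) (hl : 1 ≤ l) :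
    ((univ.filter fun f : Perm (Fin n) => plen f = l).card : ℝ) ≤ (Real.exp 1 * n ^ 2 / l) ^ l := by
  have hn' : (0:ℝ) < n := by exact_mod_cast hn
  have hl' : (0:ℝ) < l := by exact_mod_cast hl
  have h := gen_le (l / n ^ 2) (by positivity) n
  have h2 : ((univ.filter fun f : Perm (Fin n) => plen f = l).card : ℝ) * (l / n ^ 2 : ℝ) ^ l ≤
      ∑ f : Perm (Fin n), (l / n ^ 2 : ℝ) ^ plen f := by
    rw [← nsmul_eq_mul, ← sum_const]
    calc _ = ∑ f ∈ univ.filter fun f : Perm (Fin n) => plen f = l, (l / n ^ 2 : ℝ) ^ plen f :=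
          sum_congr rfl fun f hf => by rw [(mem_filter.1 hf).2]
      _ ≤ _ := sum_le_sum_of_subset_of_nonneg (subset_univ _) fun _ _ _ => by positivity
  have h3 : (n:ℝ) ^ 2 * (l / n ^ 2) = l * 1 := by field_simp
  rw [h3, Real.exp_nat_mul] at h
  have h4 := h2.trans h
  rw [← le_div_iff₀ (by positivity), ← div_pow] at h4
  refine h4.trans (le_of_eq ?_)
  congr 1
  field_simp

end
end FM

namespace FM
open Finset MvPolynomial
noncomputable section

lemma frob_eq (n : ℕ) (lam : Fin n → ℕ) (k : Multiset ℕ) :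
    (frobChar n lam k : ℝ) = phi (uu n lam) (mon k) := by
  rw [phi_apply, frobChar, ← eq_intCast (Int.castRingHom ℝ), ← coeff_map]
  rw [uu, map_mul, mon, alt, map_multiset_prod, map_multiset_prod, Multiset.map_map,
    Multiset.map_map]
  congr 2
  · congr 1
    refine Multiset.map_congr rfl fun j _ => ?_
    simp [ev_X, pw]
  · simp [map_sum, map_mul, map_prod]

lemma mon_rep (k : Multiset ℕ) (r : ℕ) : mon (k + Multiset.replicate r 1) = X 1 ^ r * mon k := by
  simp [mon, mul_comm]

lemma norm_eq (n : ℕ) (lam : Fin n → ℕ) (π : Equiv.Perm (Fin n)) :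
    normChar n lam π = phi (uu n lam) (X 1 ^ (n - π.cycleType.sum) * mon π.cycleType) /
      phi (uu n lam) (X 1 ^ n) := by
  rw [normChar, frob_eq, frob_eq, fullCycleType, mon_rep]
  congr 2
  have := mon_rep 0 n
  rw [zero_add] at this
  rw [this]; simp [mon]

lemma norm_zero (n : ℕ) (lam : Fin n → ℕ) (π : Equiv.Perm (Fin n)) (h : permLength π = 0) :
    |normChar n lam π| ≤ 1 := by
  have h1 := card_le_ct π
  rw [permLength] at h
  have h2 : π.cycleType.card = 0 := by omega
  rw [Multiset.card_eq_zero] at h2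
  rw [norm_eq, h2]
  simp only [Multiset.sum_zero, mon, Multiset.map_zero, Multiset.prod_zero, mul_one, Nat.sub_zero]
  rw [abs_div]
  exact div_self_le_one _

lemma norm_bound (n : ℕ) (hn : 1 ≤ n) (lam : Fin n → ℕ) (C E : ℝ) (hC : 0 < C)
    (hanti : ∀ i j : Fin n, i ≤ j → lam j ≤ lam i)
    (hrow : ((Finset.univ.filter fun i : Fin n => lam i ≠ 0).card : ℝ) ≤ C * Real.sqrt n)
    (hcol : ∀ i : Fin n, (lam i : ℝ) ≤ C * Real.sqrt n)
    (π : Equiv.Perm (Fin n)) (l : ℕ) (hl : permLength π = l) (hl1 : 1 ≤ l) (hE1 : 12 * C ≤ E)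
    (hE2 : 144 * ((2 * l : ℕ) : ℝ) ^ ((1:ℝ)/3) ≤ E ^ 2) (hs2 : 4 * l ≤ n)
    (hs3 : 6 * (((2 * l : ℕ) : ℝ) ^ ((2:ℝ)/3) * (2 * l : ℕ)) ≤ n) :
    |normChar n lam π| ≤ (E / Real.sqrt n) ^ l := by
  have h1 := card_le_ct π
  rw [permLength] at hl
  have hs : π.cycleType.sum ≤ 2 * l := by omega
  have hs' : (π.cycleType.sum : ℝ) ≤ (2 * l : ℕ) := by exact_mod_cast hs
  have hb := phi_bound n hn lam C E hC hanti hrow hcol π.cycleType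
    (fun j hj => (Equiv.Perm.one_lt_of_mem_cycleType hj).le) hE1
    (le_trans (by gcongr) hE2) (by omega) (le_trans (by gcongr) hs3)
    (by rintro h; rw [h] at hl; simp at hl; omega)
  rw [hl] at hb
  have h0 := phi_pow_nonneg n (uu n lam) (uu_anti n lam hanti)
  rw [norm_eq, abs_div, abs_of_nonneg h0]
  have hE0 : 0 ≤ (E / Real.sqrt n) ^ l := by
    have : 0 ≤ E := by linarith
    positivity
  refine div_le_of_le_mul₀ h0 hE0 ?_
  linarith

/-- choice of E -/
def DD (C : ℝ) : ℝ := 144 * C ^ 2 + 288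

lemma norm_bound4 (n : ℕ) (hn : 1 ≤ n) (lam : Fin n → ℕ) (C : ℝ) (hC : 0 < C)
    (hanti : ∀ i j : Fin n, i ≤ j → lam j ≤ lam i)
    (hrow : ((Finset.univ.filter fun i : Fin n => lam i ≠ 0).card : ℝ) ≤ C * Real.sqrt n)
    (hcol : ∀ i : Fin n, (lam i : ℝ) ≤ C * Real.sqrt n)
    (π : Equiv.Perm (Fin n)) (l : ℕ) (hl : permLength π = l) (hl1 : 1 ≤ l)
    (hs2 : 4 * l ≤ n)
    (hs3 : 6 * (((2 * l : ℕ) : ℝ) ^ ((2:ℝ)/3) * (2 * l : ℕ)) ≤ n) :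
    |normChar n lam π| ^ 4 ≤ ((DD C) ^ 2 * (l : ℝ) ^ ((2:ℝ)/3) / n ^ 2) ^ l := by
  have hl' : (1:ℝ) ≤ l := by exact_mod_cast hl1
  have hp1 : 1 ≤ (l : ℝ) ^ ((1:ℝ)/3) := Real.one_le_rpow hl' (by norm_num)
  have hD : 0 < DD C := by unfold DD; positivity
  set E := Real.sqrt (DD C * (l : ℝ) ^ ((1:ℝ)/3)) with hE
  have hEsq : E ^ 2 = DD C * (l : ℝ) ^ ((1:ℝ)/3) := Real.sq_sqrt (by positivity)
  have h := norm_bound n hn lam C E hC hanti hrow hcol π l hl hl1 (by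
      apply Real.le_sqrt_of_sq_le
      have : DD C * 1 ≤ DD C * (l : ℝ) ^ ((1:ℝ)/3) := by gcongr
      unfold DD at *
      nlinarith) (by
      rw [hEsq]
      push_cast
      rw [Real.mul_rpow (by norm_num) (by positivity)]
      have h2 : (2:ℝ) ^ ((1:ℝ)/3) ≤ 2 := by
        conv_rhs => rw [← Real.rpow_one 2]
        exact Real.rpow_le_rpow_of_exponent_le (by norm_num) (by norm_num)
      have h3 : 288 ≤ DD C := by unfold DD; nlinarith [sq_nonneg C]
      calc 144 * ((2:ℝ) ^ ((1:ℝ)/3) * (l : ℝ) ^ ((1:ℝ)/3)) ≤ 144 * (2 * (l : ℝ) ^ ((1:ℝ)/3)) := by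
            gcongr
        _ = 288 * (l : ℝ) ^ ((1:ℝ)/3) := by ring
        _ ≤ _ := by gcongr) hs2 hs3
  calc |normChar n lam π| ^ 4 ≤ ((E / Real.sqrt n) ^ l) ^ 4 := by gcongr
    _ = (((E / Real.sqrt n) ^ 2) ^ 2) ^ l := by
        rw [← pow_mul, ← pow_mul, ← pow_mul]; congr 1; ring
    _ = _ := by
        rw [div_pow, hEsq, Real.sq_sqrt (by positivity), div_pow, mul_pow]
        congr 3
        rw [← Real.rpow_natCast, ← Real.rpow_mul (by positivity)]
        norm_num

lemma small_of (n l : ℕ) (hn : 1 ≤ n) (hl1 : 1 ≤ l)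
    (h : (l : ℝ) ≤ (1/50) * (n : ℝ) ^ ((4:ℝ)/7)) :
    4 * l ≤ n ∧ 6 * (((2 * l : ℕ) : ℝ) ^ ((2:ℝ)/3) * (2 * l : ℕ)) ≤ n := by
  have hn' : (1:ℝ) ≤ n := by exact_mod_cast hn
  have hl' : (1:ℝ) ≤ l := by exact_mod_cast hl1
  have h1 : (n : ℝ) ^ ((4:ℝ)/7) ≤ n := by
    conv_rhs => rw [← Real.rpow_one (n:ℝ)]
    exact Real.rpow_le_rpow_of_exponent_le hn' (by norm_num)
  constructor
  · have : (4 * l : ℝ) ≤ n := by linarith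
    exact_mod_cast this
  · push_cast
    have h2 : (2 * l : ℝ) ≤ (1/25) * (n : ℝ) ^ ((4:ℝ)/7) := by linarith
    have h3 : (2 * l : ℝ) ≤ (n : ℝ) ^ ((4:ℝ)/7) := by linarith
    have h4 : (2 * l : ℝ) ^ ((2:ℝ)/3) ≤ ((n : ℝ) ^ ((4:ℝ)/7)) ^ ((2:ℝ)/3) := by gcongr
    rw [← Real.rpow_mul (by positivity)] at h4
    have h5 : (n:ℝ) ^ ((4:ℝ)/7 * (2/3)) * (n : ℝ) ^ ((4:ℝ)/7) ≤ n := by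
      rw [← Real.rpow_add (by positivity)]
      conv_rhs => rw [← Real.rpow_one (n:ℝ)]
      exact Real.rpow_le_rpow_of_exponent_le hn' (by norm_num)
    calc 6 * ((2 * l : ℝ) ^ ((2:ℝ)/3) * (2 * l)) ≤
        6 * ((n:ℝ) ^ ((4:ℝ)/7 * (2/3)) * ((1/25) * (n : ℝ) ^ ((4:ℝ)/7))) := by gcongr
      _ = (6/25) * ((n:ℝ) ^ ((4:ℝ)/7 * (2/3)) * (n : ℝ) ^ ((4:ℝ)/7)) := by ring
      _ ≤ n := by linarith

def tt (C : ℝ) (l : ℕ) : ℝ := (Real.exp 1 * (DD C) ^ 2 / (l : ℝ) ^ ((1:ℝ)/3)) ^ l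

lemma tt_nonneg (C : ℝ) (l : ℕ) : 0 ≤ tt C l := by unfold tt; positivity

lemma tt_summable (C : ℝ) : Summable (tt C) := by
  have h : Filter.Tendsto (fun l : ℕ => Real.exp 1 * (DD C) ^ 2 / (l : ℝ) ^ ((1:ℝ)/3))
      Filter.atTop (nhds 0) := by
    refine Filter.Tendsto.const_div_atTop ?_ _
    exact (tendsto_rpow_atTop (by norm_num)).comp tendsto_natCast_atTop_atTop
  have h2 := h.eventually (gt_mem_nhds (show (0:ℝ) < 1/2 by norm_num))
  refine Summable.of_norm_bounded_eventually_nat (summable_geometric_two) ?_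
  filter_upwards [h2] with l hl
  rw [Real.norm_of_nonneg (tt_nonneg C l), tt]
  exact pow_le_pow_left₀ (by positivity) hl.le _

lemma level_le (n : ℕ) (hn : 1 ≤ n) (lam : Fin n → ℕ) (C : ℝ) (hC : 0 < C)
    (hanti : ∀ i j : Fin n, i ≤ j → lam j ≤ lam i)
    (hrow : ((Finset.univ.filter fun i : Fin n => lam i ≠ 0).card : ℝ) ≤ C * Real.sqrt n)
    (hcol : ∀ i : Fin n, (lam i : ℝ) ≤ C * Real.sqrt n) (l : ℕ)
    (h : (l : ℝ) ≤ (1/50) * (n : ℝ) ^ ((4:ℝ)/7)) :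
    ∑ π ∈ univ.filter (fun π : Equiv.Perm (Fin n) => permLength π = l), |normChar n lam π| ^ 4 ≤
      tt C l := by
  have hn' : (0:ℝ) < n := by exact_mod_cast hn
  rcases Nat.eq_zero_or_pos l with rfl | hl
  · have h1 : (univ.filter (fun π : Equiv.Perm (Fin n) => permLength π = 0)) ⊆ {1} := by
      intro π hπ
      have h := (mem_filter.1 hπ).2
      have h1 := card_le_ct π
      rw [permLength] at h
      have h2 : π.cycleType.card = 0 := by omega
      rw [Multiset.card_eq_zero, Equiv.Perm.cycleType_eq_zero] at h2
      simp [h2]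
    have h2 := card_le_card h1
    rw [card_singleton] at h2
    have h3 : ∑ π ∈ univ.filter (fun π : Equiv.Perm (Fin n) => permLength π = 0),
        |normChar n lam π| ^ 4 ≤
        (univ.filter (fun π : Equiv.Perm (Fin n) => permLength π = 0)).card • (1:ℝ) := by
      refine sum_le_card_nsmul _ _ _ fun π hπ => ?_
      exact pow_le_one₀ (abs_nonneg _) (norm_zero n lam π (mem_filter.1 hπ).2)
    refine h3.trans ?_
    simp only [tt, pow_zero, nsmul_eq_mul, mul_one]
    exact_mod_cast h2
  · obtain ⟨hs2, hs3⟩ := small_of n l hn hl h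
    have hl' : (0:ℝ) < l := by exact_mod_cast hl
    have h3 := sum_le_card_nsmul (univ.filter (fun π : Equiv.Perm (Fin n) => permLength π = l))
      (fun π => |normChar n lam π| ^ 4) (((DD C) ^ 2 * (l : ℝ) ^ ((2:ℝ)/3) / n ^ 2) ^ l)
      (fun π hπ => norm_bound4 n hn lam C hC hanti hrow hcol π l (mem_filter.1 hπ).2 hl hs2 hs3)
    refine h3.trans ?_
    have h4 := count_le n l hn hl
    rw [nsmul_eq_mul]
    calc _ ≤ (Real.exp 1 * n ^ 2 / l) ^ l * ((DD C) ^ 2 * (l : ℝ) ^ ((2:ℝ)/3) / n ^ 2) ^ l := by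
          gcongr
          exact h4
      _ = tt C l := by
          rw [← mul_pow, tt]
          congr 1
          have h5 : (l : ℝ) = (l : ℝ) ^ ((2:ℝ)/3) * (l : ℝ) ^ ((1:ℝ)/3) := by
            rw [← Real.rpow_add hl']; norm_num
          have h6 : (l : ℝ) ^ ((1:ℝ)/3) ≠ 0 := by positivity
          have h7 : (l : ℝ) ^ ((2:ℝ)/3) ≠ 0 := by positivity
          have h8 : Real.exp 1 * (n:ℝ) ^ 2 / l =
            Real.exp 1 * (n:ℝ) ^ 2 / ((l : ℝ) ^ ((2:ℝ)/3) * (l : ℝ) ^ ((1:ℝ)/3)) := by rw [← h5]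
          rw [h8]
          field_simp

lemma final (C : ℝ) (hC : 0 < C) (n : ℕ) (hn : 1 ≤ n) (lam : Fin n → ℕ)
    (hanti : ∀ i j : Fin n, i ≤ j → lam j ≤ lam i)
    (hrow : ((Finset.univ.filter fun i : Fin n => lam i ≠ 0).card : ℝ) ≤ C * Real.sqrt n)
    (hcol : ∀ i : Fin n, (lam i : ℝ) ≤ C * Real.sqrt n) :
    ∑ π ∈ univ.filter (fun π : Equiv.Perm (Fin n) =>
      (permLength π : ℝ) ≤ (1/50) * (n : ℝ) ^ ((4:ℝ)/7)), |normChar n lam π| ^ 4 ≤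
      ∑' l, tt C l := by
  set S := univ.filter (fun π : Equiv.Perm (Fin n) =>
      (permLength π : ℝ) ≤ (1/50) * (n : ℝ) ^ ((4:ℝ)/7)) with hS
  rw [← sum_fiberwise_of_maps_to (s := S) (t := S.image permLength) (g := permLength)
    (fun π hπ => mem_image_of_mem _ hπ)]
  refine le_trans (sum_le_sum fun l hl => ?_)
    ((tt_summable C).sum_le_tsum (S.image permLength) fun l _ => tt_nonneg C l)
  obtain ⟨π, hπ, rfl⟩ := mem_image.1 hl
  refine le_trans (sum_le_sum_of_subset_of_nonneg ?_ fun _ _ _ => by positivity)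
    (level_le n hn lam C hC hanti hrow hcol _ (mem_filter.1 hπ).2)
  intro σ hσ
  exact mem_filter.2 ⟨mem_univ _, (mem_filter.1 hσ).2⟩

end
end FM

/-- fourth-moment bound for characters of balanced Young diagrams over
permutations of length at most `A ⋅ n^{4/7}`. -/
theorem fourth_moment_bound :
    ∀ C : ℝ, 0 < C → ∃ A : ℝ, 0 < A ∧ ∃ B : ℝ,
      ∀ (n : ℕ), 1 ≤ n →
        ∀ lam : Fin n → ℕ,
          (∀ i j : Fin n, i ≤ j → lam j ≤ lam i) →
          (∑ i, lam i = n) →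
          (((Finset.univ.filter fun i : Fin n => lam i ≠ 0).card : ℝ) ≤ C * Real.sqrt n) →
          (∀ i : Fin n, (lam i : ℝ) ≤ C * Real.sqrt n) →
          ∑ π ∈ Finset.univ.filter
              (fun π : Equiv.Perm (Fin n) =>
                (permLength π : ℝ) ≤ A * (n : ℝ) ^ ((4 : ℝ) / 7)),
            |normChar n lam π| ^ 4 ≤ B := by
  intro C hC
  refine ⟨1 / 50, by norm_num, ∑' l, FM.tt C l, ?_⟩
  intro n hn lam hanti _ hrow hcol
  exact FM.final C hC n hn lam hanti hrow hcol
end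

section
/- Generalized Frobenius formula: let λ be a partition of n with reciprocal Cauchy transform H, and let k₁,…,k_l ≥ 1 be integers. Then (−1)^l · k₁⋯k_l · Σ^λ_{k₁,…,k_l} = [z₁^{−1}]⋯[z_l^{−1}] [ ( ∏_{1≤r≤l} H(z_r)·H(z_r−1)⋯H(z_r−k_r+1) ) · ∏_{1≤s<t≤l} ( (z_s−z_t)(z_s−z_t+k_t−k_s) ) / ( (z_s−z_t−k_s)(z_s−z_t+k_t) ) ], where the right-hand side is computed as follows: the rational expression is expanded as a formal Laurent series in decreasing powers of z_l with coefficients that are rational functions of z₁,…,z_{l−1}, the coefficient of z_l^{−1} is extracted, and this procedure is repeated successively with respect to z_{l−1}, z_{l−2}, …, z₁. -/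
open scoped BigOperators

/-- The normalized character of a conjugacy class, as a rational number:
`Σ^λ_{k₁,…,k_l} = (n)_{k₁+⋯+k_l} ⋅ χ^λ(π)` where `π` has cycle type
`(k₁,…,k_l,1^{n-k₁-⋯-k_l})`, with the convention that it vanishes when
`k₁+⋯+k_l > n`. -/
noncomputable def SigmaChar (n : ℕ) (lam : Fin n → ℕ) (k : Multiset ℕ) : ℚ :=
  if k.sum ≤ n then
    (Nat.descFactorial n k.sum : ℚ) *
      (frobChar n lam (k + Multiset.replicate (n - k.sum) 1) : ℚ) /
      (frobChar n lam (Multiset.replicate n 1) : ℚ)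
  else 0

/-- The reciprocal Cauchy transform `H` of the partition `λ` of `n`, evaluated (in any
field) at `w`: `H(w) = (w+n) ⋅ ∏_{i=1}^n (w-λᵢ+i-1) / ∏_{i=1}^n (w-λᵢ+i)`. -/
noncomputable def Hof (n : ℕ) (lam : Fin n → ℕ) {F : Type} [Field F] (w : F) : F :=
  (w + (n : F)) * (∏ i : Fin n, (w - (lam i : F) + ((i : ℕ) : F))) /
    ∏ i : Fin n, (w - (lam i : F) + ((i : ℕ) : F) + 1)

/-- Iterated Laurent series fields: level 0 is `ℚ`, level `l+1` is the field of formal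
Laurent series over level `l`. -/
noncomputable def ItL : ℕ → (T : Type) × Field T
  | 0 => ⟨ℚ, inferInstance⟩
  | l + 1 =>
    haveI := (ItL l).2
    ⟨LaurentSeries (ItL l).1, inferInstance⟩

/-- The underlying type of the `l`-th iterated Laurent series field. -/
abbrev ItLT (l : ℕ) : Type := (ItL l).1

noncomputable instance (l : ℕ) : Field (ItLT l) := (ItL l).2

/-- The variable `z_{r+1}` (for `0 ≤ r < l`), as an element of the `l`-th iterated
Laurent series field: it is the inverse of the formal variable of the `(r+1)`-st level,
so that expansions in increasing powers of the level-`(r+1)` formal variable are exactly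
expansions in decreasing powers of `z_{r+1}`, with coefficients that are (expansions of)
functions of `z_1, …, z_r`. -/
noncomputable def zVar : (l : ℕ) → ℕ → ItLT l
  | 0, _ => 0
  | l + 1, r =>
    if r = l then
      (show LaurentSeries (ItLT l) from (HahnSeries.single (1 : ℤ) (1 : ItLT l))⁻¹)
    else
      (show LaurentSeries (ItLT l) from HahnSeries.C (zVar l r))

/-- Iterated coefficient extraction `[z₁^{-1}] ⋯ [z_l^{-1}]`: successively take the
coefficient of `z^{-1}` in the expansion in decreasing powers of `z = z_l, z_{l-1}, …`,
i.e. the coefficient of the first power of the formal variable at each level. -/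
noncomputable def extractInv : (l : ℕ) → ItLT l → ℚ
  | 0, x => x
  | l + 1, f => extractInv l ((show LaurentSeries (ItLT l) from f).coeff 1)

open Polynomial in
/-- formal residue at infinity -/
noncomputable def gfRes {R : Type} [CommRing R] (N D : R[X]) : R :=
  (N %ₘ D).coeff (D.natDegree - 1)

noncomputable def gfz (K : Type) [Field K] : LaurentSeries K := HahnSeries.single (-1 : ℤ) 1

open Polynomial in
noncomputable def gfev (K : Type) [Field K] : K[X] →+* LaurentSeries K :=
  Polynomial.eval₂RingHom (HahnSeries.C) (gfz K)

open Polynomial in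
theorem gfz_pow (K : Type) [Field K] (j : ℕ) : gfz K ^ j = HahnSeries.single (-(j : ℤ)) 1 := by
  rw [gfz, HahnSeries.single_pow]; simp

open Polynomial in
theorem gfev_apply (K : Type) [Field K] (p : K[X]) :
    gfev K p = ∑ j ∈ Finset.range (p.natDegree + 1), HahnSeries.single (-(j : ℤ)) (p.coeff j) := by
  simp only [gfev, Polynomial.coe_eval₂RingHom, Polynomial.eval₂_eq_sum_range, gfz_pow]
  refine Finset.sum_congr rfl fun j _ => ?_
  rw [HahnSeries.C_apply, HahnSeries.single_mul_single]; simp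

open Polynomial in
theorem gfev_coeff (K : Type) [Field K] (p : K[X]) (j : ℕ) :
    (gfev K p).coeff (-(j : ℤ)) = p.coeff j := by
  rw [gfev_apply, HahnSeries.coeff_sum]
  simp only [HahnSeries.coeff_single, neg_inj, Nat.cast_inj]
  rw [Finset.sum_ite_eq]
  split_ifs with h
  · rfl
  · rw [Polynomial.coeff_eq_zero_of_natDegree_lt]; simpa using h

open Polynomial in
theorem gfev_coeff_pos (K : Type) [Field K] (p : K[X]) (j : ℤ) (hj : 0 < j) :
    (gfev K p).coeff j = 0 := by
  rw [gfev_apply, HahnSeries.coeff_sum]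
  refine Finset.sum_eq_zero fun i _ => ?_
  rw [HahnSeries.coeff_single, if_neg]; omega

open Polynomial in
theorem gf_low (K : Type) [Field K] (D : K[X]) (hD : D.Monic) (f : LaurentSeries K) (a : ℤ)
    (hf : ∀ i < a, f.coeff i = 0) : (f * gfev K D).coeff (a - D.natDegree) = f.coeff a := by
  rw [gfev_apply, Finset.mul_sum, HahnSeries.coeff_sum, Finset.sum_eq_single D.natDegree]
  · rw [sub_eq_add_neg, HahnSeries.coeff_mul_single_add, hD.coeff_natDegree, mul_one]
  · intro j hj hne
    have : a - D.natDegree = (a - D.natDegree + j) + (-(j:ℤ)) := by ring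
    rw [this, HahnSeries.coeff_mul_single_add, hf, zero_mul]
    have := Finset.mem_range.1 hj
    omega
  · simp

open Polynomial in
theorem gfev_ne_zero (K : Type) [Field K] (D : K[X]) (hD : D ≠ 0) : gfev K D ≠ 0 := by
  intro h
  apply hD
  ext j
  rw [← gfev_coeff, h]; simp

open Polynomial in
theorem gf_coeff_div (K : Type) [Field K] (N D : K[X]) (hD : D.Monic) :
    (gfev K N / gfev K D).coeff 1 = gfRes N D := by
  have hD0 := gfev_ne_zero K D hD.ne_zero
  set r := N %ₘ D with hr
  have hdeg : r.degree < D.degree := Polynomial.degree_modByMonic_lt _ hD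
  have hN : N = r + D * (N /ₘ D) := (Polynomial.modByMonic_add_div N D).symm
  have h1 : gfev K N / gfev K D = gfev K r / gfev K D + gfev K (N /ₘ D) := by
    conv_lhs => rw [hN]
    rw [map_add, map_mul]; field_simp
  rw [h1, HahnSeries.coeff_add, gfev_coeff_pos _ _ _ one_pos, add_zero, gfRes, ← hr]
  set f := gfev K r / gfev K D with hf
  have hfD : f * gfev K D = gfev K r := by rw [hf]; field_simp
  have hrc : ∀ j : ℕ, D.natDegree ≤ j → r.coeff j = 0 := by
    intro j hj
    apply Polynomial.coeff_eq_zero_of_degree_lt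
    refine hdeg.trans_le ?_
    rw [Polynomial.degree_eq_natDegree hD.ne_zero]; exact_mod_cast hj
  have key : ∀ i ≤ 0, f.coeff i = 0 := by
    by_contra! hcon
    obtain ⟨i, hi, hne⟩ := hcon
    have hf0 : f ≠ 0 := by rintro h; rw [h] at hne; simp at hne
    have ho : f.order ≤ i := HahnSeries.order_le_of_coeff_ne_zero hne
    have h2 := gf_low K D hD f f.order (fun i hi => HahnSeries.coeff_eq_zero_of_lt_order hi)
    rw [hfD] at h2
    have h3 : f.coeff f.order ≠ 0 := by
      rw [HahnSeries.coeff_order_eq_zero.ne]; exact hf0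
    apply h3
    rw [← h2]
    obtain ⟨j, hj⟩ := Int.eq_ofNat_of_zero_le (show 0 ≤ (D.natDegree : ℤ) - f.order by omega)
    have : f.order - D.natDegree = -(j : ℤ) := by omega
    rw [this, gfev_coeff, hrc]; omega
  have h2 := gf_low K D hD f 1 (fun i hi => key i (by omega))
  rw [← h2, hfD]
  rcases Nat.eq_zero_or_pos D.natDegree with h0 | h0
  · rw [h0, gfev_coeff_pos _ _ _ (by simp), hrc _ (by omega)]
  · have : (1 : ℤ) - D.natDegree = -((D.natDegree - 1 : ℕ) : ℤ) := by omega
    rw [this, gfev_coeff]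

open Polynomial in
theorem gfRes_map {R S : Type} [CommRing R] [CommRing S] [Nontrivial S] (f : R →+* S) (N D : R[X])
    (hD : D.Monic) : f (gfRes N D) = gfRes (N.map f) (D.map f) := by
  rw [gfRes, gfRes, ← Polynomial.map_modByMonic f hD, Polynomial.coeff_map, hD.natDegree_map]

open Polynomial in
theorem gfRes_lagrange {n : ℕ} (a : Fin n → ℚ) (ha : Function.Injective a) (N : ℚ[X]) :
    gfRes N (∏ i, (X - C (a i))) =
      ∑ i, N.eval (a i) / ∏ j ∈ Finset.univ.erase i, (a i - a j) := by
  have hm : (∏ i, (X - C (a i))).Monic := monic_prod_of_monic _ _ fun i _ => monic_X_sub_C _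
  have hd : (∏ i, (X - C (a i))).natDegree = n := by
    rw [natDegree_prod_of_monic _ _ fun i _ => monic_X_sub_C _]; simp
  have hlt := degree_modByMonic_lt N hm
  rw [degree_eq_natDegree hm.ne_zero, hd] at hlt
  have := Lagrange.coeff_eq_sum (s := Finset.univ) (v := a) ha.injOn
    (P := N %ₘ (∏ i, (X - C (a i)))) (by simpa using hlt)
  rw [gfRes, hd]
  rw [Finset.card_univ, Fintype.card_fin] at this
  rw [this]
  refine Finset.sum_congr rfl fun i _ => ?_
  congr 1
  conv_rhs => rw [← modByMonic_add_div N (∏ i, (X - C (a i)))]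
  have h0 : ∏ j, eval (a i) (X - C (a j)) = 0 :=
    Finset.prod_eq_zero (Finset.mem_univ i) (by simp)
  rw [eval_add, eval_mul, eval_prod, h0, zero_mul, add_zero]

section gfPart2
open Polynomial

/-- shifted nodal polynomial -/
noncomputable def gfPhi {R : Type} [CommRing R] {n : ℕ} (m : Fin n → ℕ) (k : ℕ) : R[X] :=
  ∏ i, (X - C (k : R) - C ((m i : R) - (n : R)))

noncomputable def gfCn {R : Type} [CommRing R] (ks : ℕ → ℕ) (l k : ℕ) (p : ℕ → R) : R[X] :=
  ∏ s ∈ Finset.range l, ((X - C (p s)) * (X - C (p s) - C (k : R) + C (ks s : R)))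

noncomputable def gfCd {R : Type} [CommRing R] (ks : ℕ → ℕ) (l k : ℕ) (p : ℕ → R) : R[X] :=
  ∏ s ∈ Finset.range l, ((X - C (p s) + C (ks s : R)) * (X - C (p s) - C (k : R)))

noncomputable def gfF (R : Type) [CommRing R] (n k : ℕ) : R[X] :=
  ∏ j ∈ Finset.range k, (X + C (n : R) - C (j : R))

noncomputable def gfP {R : Type} [CommRing R] (l : ℕ) (p : ℕ → R) (P : MvPolynomial ℕ ℤ) : R[X] :=
  MvPolynomial.eval₂Hom (Int.castRingHom R[X]) (Function.update (fun r => C (p r)) l X) P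

theorem gfPhi_map {R S : Type} [CommRing R] [CommRing S] (f : R →+* S) {n : ℕ} (m : Fin n → ℕ)
    (k : ℕ) : (gfPhi m k : R[X]).map f = gfPhi m k := by
  simp [gfPhi, Polynomial.map_prod]

theorem gfCn_map {R S : Type} [CommRing R] [CommRing S] (f : R →+* S) (ks : ℕ → ℕ) (l k : ℕ)
    (p : ℕ → R) : (gfCn ks l k p).map f = gfCn ks l k (fun s => f (p s)) := by
  simp [gfCn, Polynomial.map_prod]

theorem gfCd_map {R S : Type} [CommRing R] [CommRing S] (f : R →+* S) (ks : ℕ → ℕ) (l k : ℕ)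
    (p : ℕ → R) : (gfCd ks l k p).map f = gfCd ks l k (fun s => f (p s)) := by
  simp [gfCd, Polynomial.map_prod]

theorem gfF_map {R S : Type} [CommRing R] [CommRing S] (f : R →+* S) (n k : ℕ) :
    (gfF R n k).map f = gfF S n k := by
  simp [gfF, Polynomial.map_prod]

theorem gfP_map {R S : Type} [CommRing R] [CommRing S] (f : R →+* S) (l : ℕ)
    (p : ℕ → R) (P : MvPolynomial ℕ ℤ) : (gfP l p P).map f = gfP l (fun s => f (p s)) P := by
  have : (Polynomial.mapRingHom f).comp (MvPolynomial.eval₂Hom (Int.castRingHom R[X])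
      (Function.update (fun r => C (p r)) l X)) = MvPolynomial.eval₂Hom (Int.castRingHom S[X])
      (Function.update (fun r => C (f (p r))) l X) := by
    apply MvPolynomial.ringHom_ext
    · intro r; simp
    · intro i
      by_cases h : i = l
      · subst h; simp
      · simp [Function.update_of_ne h]
  exact congrArg (fun g => g P) this

theorem gfPhi_monic {R : Type} [CommRing R] {n : ℕ} (m : Fin n → ℕ) (k : ℕ) :
    (gfPhi m k : R[X]).Monic := by
  refine monic_prod_of_monic _ _ fun i _ => ?_
  rw [sub_sub, ← C_add]; exact monic_X_sub_C _

theorem gfCd_monic {R : Type} [CommRing R] (ks : ℕ → ℕ) (l k : ℕ) (p : ℕ → R) :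
    (gfCd ks l k p).Monic := by
  refine monic_prod_of_monic _ _ fun i _ => ?_
  refine Monic.mul ?_ ?_
  · have : X - C (p i) + C (ks i : R) = X - C (p i - ks i) := by rw [C_sub]; ring
    rw [this]; exact monic_X_sub_C _
  · rw [sub_sub, ← C_add]; exact monic_X_sub_C _

/-- The polynomial obtained by extracting one coefficient. -/
noncomputable def gfQ {n : ℕ} (m : Fin n → ℕ) (ks : ℕ → ℕ) (l k : ℕ) (P : MvPolynomial ℕ ℤ) :
    MvPolynomial ℕ ℤ :=
  gfRes (gfF _ n k * gfPhi m k * gfCn ks l k MvPolynomial.X * gfP l MvPolynomial.X P)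
    (gfPhi m 0 * gfCd ks l k MvPolynomial.X)

theorem gfQ_eval {n : ℕ} (m : Fin n → ℕ) (ks : ℕ → ℕ) (l k : ℕ) (P : MvPolynomial ℕ ℤ)
    (K : Type) [Field K] (p : ℕ → K) :
    MvPolynomial.eval₂Hom (Int.castRingHom K) p (gfQ m ks l k P) =
      gfRes (gfF K n k * gfPhi m k * gfCn ks l k p * gfP l p P) (gfPhi m 0 * gfCd ks l k p) := by
  rw [gfQ, gfRes_map _ _ _ ((gfPhi_monic _ _).mul (gfCd_monic _ _ _ _))]
  simp only [Polynomial.map_mul, gfF_map, gfPhi_map, gfCn_map, gfCd_map, gfP_map]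
  simp only [MvPolynomial.coe_eval₂Hom, MvPolynomial.eval₂_X]

noncomputable def gfr {n : ℕ} (m : Fin n → ℕ) (i : Fin n) (k : ℕ) : ℚ :=
  -(k : ℚ) * ((m i).descFactorial k : ℚ) *
    (∏ j ∈ Finset.univ.erase i, ((m i : ℚ) - k - m j)) /
      ∏ j ∈ Finset.univ.erase i, ((m i : ℚ) - m j)

noncomputable def gfnext {n : ℕ} (ks : ℕ → ℕ) (l : ℕ) (st : (Fin n → ℕ) × (ℕ → ℚ)) (i : Fin n) :
    (Fin n → ℕ) × (ℕ → ℚ) :=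
  (Function.update st.1 i (st.1 i - ks l), Function.update st.2 l ((st.1 i : ℚ) - n))

noncomputable def gfT {n : ℕ} (ks : ℕ → ℕ) (l : ℕ) (g : (Fin n → ℕ) × (ℕ → ℚ) → ℚ)
    (st : (Fin n → ℕ) × (ℕ → ℚ)) : ℚ :=
  ∑ i, gfr st.1 i (ks l) * g (gfnext ks l st i)

noncomputable def gfI {n : ℕ} (ks : ℕ → ℕ) :
    ℕ → ((Fin n → ℕ) × (ℕ → ℚ) → ℚ) → (Fin n → ℕ) × (ℕ → ℚ) → ℚ
  | 0, g => g
  | l + 1, g => gfI ks l (gfT ks l g)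

structure GfGood {n : ℕ} (m0 : Fin n → ℕ) (ks : ℕ → ℕ) (l : ℕ)
    (st : (Fin n → ℕ) × (ℕ → ℚ)) : Prop where
  inj : Function.Injective st.1
  tot : ∑ i, st.1 i + ∑ s ∈ Finset.range l, ks s = ∑ i, m0 i
  rat : ∀ k : ℕ, (gfPhi m0 k : ℚ[X]) * gfCn ks l k st.2 * gfPhi st.1 0 =
    gfPhi st.1 k * (gfPhi m0 0 * gfCd ks l k st.2)

theorem gfr_ne {n : ℕ} {m : Fin n → ℕ} {i : Fin n} {k : ℕ} (h : gfr m i k ≠ 0) :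
    k ≤ m i ∧ ∀ j, j ≠ i → m i - k ≠ m j := by
  have h1 : k ≤ m i := by
    by_contra hlt
    apply h
    rw [gfr, Nat.descFactorial_of_lt (by omega)]; simp
  refine ⟨h1, fun j hj he => h ?_⟩
  rw [gfr, Finset.prod_eq_zero (i := j) (by simpa using hj)]
  · simp
  · rw [← he, Nat.cast_sub h1]; ring

theorem gfPhi_update {n : ℕ} (m : Fin n → ℕ) (i : Fin n) (kl k : ℕ) (h : kl ≤ m i) :
    (gfPhi (Function.update m i (m i - kl)) k : ℚ[X]) * (X - C (k : ℚ) - C ((m i : ℚ) - n)) =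
      gfPhi m k * (X - C (k : ℚ) - C ((m i : ℚ) - n) + C (kl : ℚ)) := by
  rw [gfPhi, gfPhi, ← Finset.mul_prod_erase _ _ (Finset.mem_univ i),
    ← Finset.mul_prod_erase (a := i) _ (fun i => X - C (k : ℚ) - C ((m i : ℚ) - n))
      (Finset.mem_univ i)]
  have : ∏ x ∈ Finset.univ.erase i, (X - C (k : ℚ) -
      C (((Function.update m i (m i - kl) x : ℕ) : ℚ) - n)) =
      ∏ x ∈ Finset.univ.erase i, (X - C (k : ℚ) - C ((m x : ℚ) - n)) := by
    refine Finset.prod_congr rfl fun j hj => ?_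
    rw [Function.update_of_ne (Finset.ne_of_mem_erase hj)]
  rw [this, Function.update_self, Nat.cast_sub h]
  simp only [C_sub]
  ring

theorem gfGood_step {n : ℕ} {m0 : Fin n → ℕ} {ks : ℕ → ℕ} {l : ℕ}
    {st : (Fin n → ℕ) × (ℕ → ℚ)} (hg : GfGood m0 ks l st) {i : Fin n}
    (h : gfr st.1 i (ks l) ≠ 0) : GfGood m0 ks (l + 1) (gfnext ks l st i) := by
  obtain ⟨hle, hne⟩ := gfr_ne h
  refine ⟨?_, ?_, ?_⟩
  · intro a b hab
    simp only [gfnext, Function.update_apply] at hab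
    split_ifs at hab with h1 h2 h2
    · rw [h1, h2]
    · exact absurd hab (hne _ h2)
    · exact absurd hab.symm (hne _ h1)
    · exact hg.inj hab
  · rw [← hg.tot, Finset.sum_range_succ]
    simp only [gfnext]
    rw [Finset.sum_update_of_mem (Finset.mem_univ i),
      ← Finset.add_sum_erase _ _ (Finset.mem_univ i), Finset.sdiff_singleton_eq_erase]
    omega
  · intro k
    have hr := hg.rat k
    have h0 := gfPhi_update st.1 i (ks l) 0 hle
    have hk := gfPhi_update st.1 i (ks l) k hle
    have hn : gfCn ks (l + 1) k (gfnext ks l st i).2 = gfCn ks l k st.2 *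
        ((X - C ((st.1 i : ℚ) - n)) *
          (X - C ((st.1 i : ℚ) - n) - C (k : ℚ) + C (ks l : ℚ))) := by
      rw [gfCn, Finset.prod_range_succ, gfCn]
      simp only [gfnext, Function.update_self]
      congr 1
      refine Finset.prod_congr rfl fun s hs => ?_
      rw [Function.update_of_ne (Finset.mem_range.1 hs).ne]
    have hd : gfCd ks (l + 1) k (gfnext ks l st i).2 = gfCd ks l k st.2 *
        ((X - C ((st.1 i : ℚ) - n) + C (ks l : ℚ)) * (X - C ((st.1 i : ℚ) - n) - C (k : ℚ))) := by
      rw [gfCd, Finset.prod_range_succ, gfCd]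
      simp only [gfnext, Function.update_self]
      congr 1
      refine Finset.prod_congr rfl fun s hs => ?_
      rw [Function.update_of_ne (Finset.mem_range.1 hs).ne]
    rw [hn, hd]
    simp only [gfnext]
    simp only [Nat.cast_zero, C_0, sub_zero] at h0
    generalize C ((st.1 i : ℚ) - n) = a at *
    generalize C (ks l : ℚ) = b at *
    generalize C (k : ℚ) = c at *
    linear_combination (gfPhi m0 k * gfCn ks l k st.2 * (X - a - c + b)) * h0 +
      (X - a - c + b) * (X - a + b) * hr - (gfPhi m0 0 * gfCd ks l k st.2 * (X - a + b)) * hk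

theorem gfI_congr {n : ℕ} {m0 : Fin n → ℕ} {ks : ℕ → ℕ} {st : (Fin n → ℕ) × (ℕ → ℚ)}
    (h0 : GfGood m0 ks 0 st) (l : ℕ) (g g' : (Fin n → ℕ) × (ℕ → ℚ) → ℚ)
    (h : ∀ st, GfGood m0 ks l st → g st = g' st) : gfI ks l g st = gfI ks l g' st := by
  induction l generalizing g g' with
  | zero => exact h _ h0
  | succ l ih =>
    apply ih
    intro st hst
    refine Finset.sum_congr rfl fun i _ => ?_
    by_cases hz : gfr st.1 i (ks l) = 0
    · simp [hz]
    · rw [h _ (gfGood_step hst hz)]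

theorem gfQ_good {n : ℕ} {m0 : Fin n → ℕ} {ks : ℕ → ℕ} {l : ℕ}
    {st : (Fin n → ℕ) × (ℕ → ℚ)} (hg : GfGood m0 ks l st) (P : MvPolynomial ℕ ℤ) :
    MvPolynomial.eval₂Hom (Int.castRingHom ℚ) st.2 (gfQ m0 ks l (ks l) P) =
      gfT ks l (fun st => MvPolynomial.eval₂Hom (Int.castRingHom ℚ) st.2 P) st := by
  have hm := (gfPhi_monic (R := ℚ) m0 0).mul (gfCd_monic ks l (ks l) st.2)
  have hm' := (gfPhi_monic (R := ℚ) st.1 0)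
  rw [gfQ_eval, ← gf_coeff_div _ _ _ hm]
  have : gfev ℚ (gfF ℚ n (ks l) * gfPhi m0 (ks l) * gfCn ks l (ks l) st.2 * gfP l st.2 P) /
      gfev ℚ (gfPhi m0 0 * gfCd ks l (ks l) st.2) =
      gfev ℚ (gfF ℚ n (ks l) * gfPhi st.1 (ks l) * gfP l st.2 P) / gfev ℚ (gfPhi st.1 0) := by
    rw [div_eq_div_iff (gfev_ne_zero _ _ hm.ne_zero) (gfev_ne_zero _ _ hm'.ne_zero),
      ← map_mul, ← map_mul]
    congr 1
    linear_combination (gfF ℚ n (ks l) * gfP l st.2 P) * hg.rat (ks l)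
  rw [this, gf_coeff_div _ _ _ hm']
  have h0 : (gfPhi st.1 0 : ℚ[X]) = ∏ i, (X - C ((st.1 i : ℚ) - n)) := by simp [gfPhi]
  rw [h0, gfRes_lagrange]
  · refine Finset.sum_congr rfl fun i _ => ?_
    have hP : (gfP l st.2 P).eval ((st.1 i : ℚ) - n) =
        MvPolynomial.eval₂Hom (Int.castRingHom ℚ) (gfnext ks l st i).2 P := by
      have : (Polynomial.evalRingHom ((st.1 i : ℚ) - n)).comp
          (MvPolynomial.eval₂Hom (Int.castRingHom ℚ[X])
          (Function.update (fun r => C (st.2 r)) l X)) =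
          MvPolynomial.eval₂Hom (Int.castRingHom ℚ) (gfnext ks l st i).2 := by
        apply MvPolynomial.ringHom_ext
        · intro r; simp
        · intro i
          by_cases h : i = l
          · subst h; simp [gfnext]
          · simp [gfnext, Function.update_of_ne h]
      exact congrArg (fun g => g P) this
    have hF : (gfF ℚ n (ks l)).eval ((st.1 i : ℚ) - n) = ((st.1 i).descFactorial (ks l) : ℚ) := by
      rw [gfF, eval_prod, ← descPochhammer_eval_eq_descFactorial,
        descPochhammer_eval_eq_prod_range]
      simp
    have hPhi : (gfPhi st.1 (ks l) : ℚ[X]).eval ((st.1 i : ℚ) - n) =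
        -(ks l : ℚ) * ∏ j ∈ Finset.univ.erase i, ((st.1 i : ℚ) - ks l - st.1 j) := by
      rw [gfPhi, eval_prod, ← Finset.mul_prod_erase _ _ (Finset.mem_univ i)]
      congr 1
      · simp
      · refine Finset.prod_congr rfl fun j _ => ?_
        simp; ring
    rw [eval_mul, eval_mul, hP, hF, hPhi, gfr]
    simp only [sub_sub_sub_cancel_right]
    ring
  · intro a b hab
    apply hg.inj
    simpa using hab

end gfPart2

section gfPart3

theorem gfHof_map (n : ℕ) (lam : Fin n → ℕ) {F G : Type} [Field F] [Field G] (f : F →+* G) (w : F) :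
    f (Hof n lam w) = Hof n lam (f w) := by
  simp [Hof, map_div₀, map_prod]

theorem gfz_eq (K : Type) [Field K] :
    (HahnSeries.single (1 : ℤ) (1 : K))⁻¹ = gfz K := by
  rw [gfz, HahnSeries.inv_single]; simp

def gfmu (n : ℕ) (lam : Fin n → ℕ) (i : Fin n) : ℕ := lam i + (n - 1 - (i : ℕ))

theorem gfmu_cast (n : ℕ) (lam : Fin n → ℕ) (i : Fin n) {F : Type} [CommRing F] :
    (gfmu n lam i : F) = lam i + n - 1 - (i : ℕ) := by
  have h := i.2
  have : gfmu n lam i + 1 + (i : ℕ) = lam i + n := by rw [gfmu]; omega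
  have h2 : ((gfmu n lam i + 1 + (i : ℕ) : ℕ) : F) = ((lam i + n : ℕ) : F) := by rw [this]
  push_cast at h2
  linear_combination h2

@[simp] theorem gfev_X (K : Type) [Field K] : gfev K Polynomial.X = gfz K := by simp [gfev]
@[simp] theorem gfev_C (K : Type) [Field K] (a : K) :
    gfev K (Polynomial.C a) = HahnSeries.C a := by simp [gfev]

theorem gfF_succ (R : Type) [CommRing R] (n k : ℕ) : gfF R n (k + 1) =
    gfF R n k * (Polynomial.X + Polynomial.C (n : R) - Polynomial.C (k : R)) := by
  rw [gfF, Finset.prod_range_succ, gfF]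

theorem gf_prodHof (n : ℕ) (lam : Fin n → ℕ) (K : Type) [Field K] (k : ℕ) :
    ∏ j ∈ Finset.range k, Hof n lam (gfz K - (j : LaurentSeries K)) =
      gfev K (gfF K n k) * gfev K (gfPhi (gfmu n lam) k) / gfev K (gfPhi (gfmu n lam) 0) := by
  have hne : ∀ j, gfev K (gfPhi (gfmu n lam) j) ≠ 0 :=
    fun j => gfev_ne_zero _ _ (gfPhi_monic _ _).ne_zero
  have hH : ∀ j : ℕ, Hof n lam (gfz K - (j : LaurentSeries K)) =
      gfev K (Polynomial.X + Polynomial.C (n : K) - Polynomial.C (j : K)) *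
        gfev K (gfPhi (gfmu n lam) (j + 1)) / gfev K (gfPhi (gfmu n lam) j) := by
    intro j
    rw [Hof]
    congr 1
    · congr 1
      · simp; ring
      · rw [gfPhi, map_prod]
        refine Finset.prod_congr rfl fun i _ => ?_
        simp [gfmu_cast]; ring
    · rw [gfPhi, map_prod]
      refine Finset.prod_congr rfl fun i _ => ?_
      simp [gfmu_cast]; ring
  induction k with
  | zero => simp [gfF, div_self (hne 0)]
  | succ k ih =>
    rw [Finset.prod_range_succ, ih, hH, gfF_succ, map_mul]
    have := hne k
    have := hne 0
    field_simp

/-- cross factor -/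
noncomputable def gfX {F : Type} [Field F] (a b : F) (ka kb : ℕ) : F :=
  ((a - b) * (a - b + (kb : F) - (ka : F))) / ((a - b - (ka : F)) * (a - b + (kb : F)))

theorem gfX_map {F G : Type} [Field F] [Field G] (f : F →+* G) (a b : F) (ka kb : ℕ) :
    f (gfX a b ka kb) = gfX (f a) (f b) ka kb := by
  simp [gfX, map_div₀]

theorem gf_prodX (K : Type) [Field K] (ks : ℕ → ℕ) (l k : ℕ) (p : ℕ → K) :
    ∏ s ∈ Finset.range l, gfX (HahnSeries.C (p s)) (gfz K) (ks s) k =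
      gfev K (gfCn ks l k p) / gfev K (gfCd ks l k p) := by
  rw [gfCn, gfCd, map_prod, map_prod, ← Finset.prod_div_distrib]
  refine Finset.prod_congr rfl fun s _ => ?_
  rw [gfX]
  congr 1
  · simp; ring
  · simp; ring

theorem gf_step (n : ℕ) (lam : Fin n → ℕ) (K : Type) [Field K] (ks : ℕ → ℕ) (l k : ℕ) (p : ℕ → K)
    (A : K) (P : MvPolynomial ℕ ℤ) :
    (HahnSeries.C A * ((∏ j ∈ Finset.range k, Hof n lam (gfz K - (j : LaurentSeries K))) *
      ∏ s ∈ Finset.range l, gfX (HahnSeries.C (p s)) (gfz K) (ks s) k) *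
      MvPolynomial.eval₂Hom (Int.castRingHom (LaurentSeries K))
        (Function.update (fun r => HahnSeries.C (p r)) l (gfz K)) P).coeff 1 =
    A * MvPolynomial.eval₂Hom (Int.castRingHom K) p (gfQ (gfmu n lam) ks l k P) := by
  have hP : MvPolynomial.eval₂Hom (Int.castRingHom (LaurentSeries K))
        (Function.update (fun r => HahnSeries.C (p r)) l (gfz K)) P = gfev K (gfP l p P) := by
    have : (gfev K).comp
        (MvPolynomial.eval₂Hom (Int.castRingHom (Polynomial K))
        (Function.update (fun r => Polynomial.C (p r)) l Polynomial.X)) =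
        MvPolynomial.eval₂Hom (Int.castRingHom (LaurentSeries K))
        (Function.update (fun r => HahnSeries.C (p r)) l (gfz K)) := by
      apply MvPolynomial.ringHom_ext
      · intro r; simp
      · intro i
        by_cases h : i = l
        · subst h; simp
        · simp [Function.update_of_ne h]
    exact (congrArg (fun g => g P) this).symm
  rw [hP, gf_prodHof, gf_prodX, gfQ_eval,
    ← gf_coeff_div _ _ _ ((gfPhi_monic _ _).mul (gfCd_monic _ _ _ _)), mul_assoc]
  have hC : ∀ f : LaurentSeries K, (HahnSeries.C A * f).coeff 1 = A * f.coeff 1 := by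
    intro f; rw [HahnSeries.C_mul_eq_smul]; simp
  rw [hC]
  congr 2
  simp only [map_mul]
  field_simp

noncomputable def gfA (n : ℕ) (lam : Fin n → ℕ) (ks : ℕ → ℕ) (l : ℕ) : ItLT l :=
  (∏ r ∈ Finset.range l, ∏ j ∈ Finset.range (ks r), Hof n lam (zVar l r - (j : ItLT l))) *
    ∏ t ∈ Finset.range l, ∏ s ∈ Finset.range t, gfX (zVar l s) (zVar l t) (ks s) (ks t)

noncomputable def gfC (l : ℕ) : ItLT l →+* ItLT (l + 1) :=
  (HahnSeries.C : ItLT l →+* LaurentSeries (ItLT l))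

theorem zVar_last (l : ℕ) : zVar (l + 1) l = (gfz (ItLT l) : LaurentSeries (ItLT l)) := by
  rw [← gfz_eq]
  exact if_pos rfl

theorem zVar_ne (l r : ℕ) (h : r ≠ l) : zVar (l + 1) r = gfC l (zVar l r) := by
  exact if_neg h

theorem gfA_succ (n : ℕ) (lam : Fin n → ℕ) (ks : ℕ → ℕ) (l : ℕ) :
    gfA n lam ks (l + 1) = gfC l (gfA n lam ks l) *
      ((∏ j ∈ Finset.range (ks l), Hof n lam (zVar (l + 1) l - (j : ItLT (l + 1)))) *
      ∏ s ∈ Finset.range l, gfX (gfC l (zVar l s)) (zVar (l + 1) l) (ks s) (ks l)) := by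
  have h1 : ∀ r ∈ Finset.range l, zVar (l + 1) r = gfC l (zVar l r) :=
    fun r hr => zVar_ne l r (Finset.mem_range.1 hr).ne
  rw [gfA, Finset.prod_range_succ, Finset.prod_range_succ, gfA, map_mul, map_prod, map_prod]
  simp only [map_prod, gfX_map, gfHof_map, map_sub, map_natCast]
  have e1 : ∏ r ∈ Finset.range l, ∏ j ∈ Finset.range (ks r),
      Hof n lam (zVar (l + 1) r - (j : ItLT (l + 1))) =
      ∏ r ∈ Finset.range l, ∏ j ∈ Finset.range (ks r),
      Hof n lam (gfC l (zVar l r) - (j : ItLT (l + 1))) :=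
    Finset.prod_congr rfl fun r hr => by rw [h1 r hr]
  have e2 : ∏ t ∈ Finset.range l, ∏ s ∈ Finset.range t,
      gfX (zVar (l + 1) s) (zVar (l + 1) t) (ks s) (ks t) =
      ∏ t ∈ Finset.range l, ∏ s ∈ Finset.range t,
      gfX (gfC l (zVar l s)) (gfC l (zVar l t)) (ks s) (ks t) :=
    Finset.prod_congr rfl fun t ht => Finset.prod_congr rfl fun s hs => by
      rw [h1 t ht, h1 s (Finset.mem_range.2
        ((Finset.mem_range.1 hs).trans (Finset.mem_range.1 ht)))]
  have e3 : ∏ s ∈ Finset.range l, gfX (zVar (l + 1) s) (zVar (l + 1) l) (ks s) (ks l) =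
      ∏ s ∈ Finset.range l, gfX (gfC l (zVar l s)) (zVar (l + 1) l) (ks s) (ks l) :=
    Finset.prod_congr rfl fun s hs => by rw [h1 s hs]
  rw [e1, e2, e3]
  ring

theorem gf_extract_succ (n : ℕ) (lam : Fin n → ℕ) (ks : ℕ → ℕ) (l : ℕ) (P : MvPolynomial ℕ ℤ) :
    extractInv (l + 1) (gfA n lam ks (l + 1) *
      MvPolynomial.eval₂Hom (Int.castRingHom (ItLT (l + 1))) (zVar (l + 1)) P) =
    extractInv l (gfA n lam ks l * MvPolynomial.eval₂Hom (Int.castRingHom (ItLT l)) (zVar l)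
      (gfQ (gfmu n lam) ks l (ks l) P)) := by
  have hz : zVar (l + 1) = Function.update (fun r => gfC l (zVar l r)) l (zVar (l + 1) l) := by
    funext r
    by_cases h : r = l
    · subst h; simp
    · rw [Function.update_of_ne h, zVar_ne l r h]
  rw [hz, gfA_succ, zVar_last]
  exact congrArg (extractInv l)
    (gf_step n lam (ItLT l) ks l (ks l) (zVar l) (gfA n lam ks l) P)

theorem gf_extract (n : ℕ) (lam : Fin n → ℕ) (ks : ℕ → ℕ)
    (h0 : GfGood (gfmu n lam) ks 0 (gfmu n lam, fun _ => 0)) (l : ℕ) (P : MvPolynomial ℕ ℤ) :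
    extractInv l (gfA n lam ks l *
      MvPolynomial.eval₂Hom (Int.castRingHom (ItLT l)) (zVar l) P) =
    gfI ks l (fun st => MvPolynomial.eval₂Hom (Int.castRingHom ℚ) st.2 P)
      (gfmu n lam, fun _ => 0) := by
  induction l generalizing P with
  | zero =>
    have : gfA n lam ks 0 = 1 := by simp [gfA]
    rw [this, one_mul]
    rfl
  | succ l ih =>
    rw [gf_extract_succ, ih]
    exact gfI_congr h0 l _ _ fun st hst => gfQ_good hst P

end gfPart3

section gfPart4
open MvPolynomial

noncomputable def gfpp (n k : ℕ) : MvPolynomial (Fin n) ℤ := ∑ i : Fin n, X i ^ k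

noncomputable def gfDel (n : ℕ) : MvPolynomial (Fin n) ℤ :=
  ∑ w : Equiv.Perm (Fin n), C ((Equiv.Perm.sign w : ℤ)) *
    ∏ i : Fin n, X i ^ (n - 1 - ((w i : ℕ)))

noncomputable def gfco {n : ℕ} (m : Fin n → ℕ) (p : MvPolynomial (Fin n) ℤ) : ℤ :=
  coeff (Finsupp.equivFunOnFinite.symm m) p

theorem gfco_pp {n : ℕ} (m : Fin n → ℕ) (k : ℕ) (q : MvPolynomial (Fin n) ℤ) :
    gfco m (gfpp n k * q) =
      ∑ i, if k ≤ m i then gfco (Function.update m i (m i - k)) q else 0 := by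
  rw [gfco, gfpp, Finset.sum_mul, coeff_sum]
  refine Finset.sum_congr rfl fun i _ => ?_
  rw [X_pow_eq_monomial, coeff_monomial_mul', one_mul]
  have h1 : (Finsupp.single i k ≤ Finsupp.equivFunOnFinite.symm m) ↔ k ≤ m i := by
    rw [Finsupp.single_le_iff]; rfl
  simp only [h1]
  split_ifs
  · rw [gfco]
    congr 1
    ext j
    by_cases h : j = i
    · subst h; simp
    · simp [Function.update_of_ne h, Finsupp.single_eq_of_ne h]
  · rfl

def GfAlt {n : ℕ} (q : MvPolynomial (Fin n) ℤ) : Prop :=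
  ∀ i j, i ≠ j → rename (Equiv.swap i j) q = -q

theorem gfAlt_co {n : ℕ} {q : MvPolynomial (Fin n) ℤ} (hq : GfAlt q) (m : Fin n → ℕ)
    (hm : ¬ Function.Injective m) : gfco m q = 0 := by
  rw [Function.Injective] at hm
  push Not at hm
  obtain ⟨i, j, he, hne⟩ := hm
  have h := coeff_rename_mapDomain (Equiv.swap i j) (Equiv.injective _) q
    (Finsupp.equivFunOnFinite.symm m)
  have h2 : Finsupp.mapDomain (Equiv.swap i j) (Finsupp.equivFunOnFinite.symm m) =
      Finsupp.equivFunOnFinite.symm m := by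
    ext a
    rw [← Finsupp.equivMapDomain_eq_mapDomain, Finsupp.equivMapDomain_apply]
    simp only [Finsupp.equivFunOnFinite_symm_apply_apply, Equiv.symm_swap]
    rcases eq_or_ne a i with rfl | h1
    · simp [he]
    · rcases eq_or_ne a j with rfl | h2
      · simp [he]
      · rw [Equiv.swap_apply_of_ne_of_ne h1 h2]
  rw [h2, hq i j hne, coeff_neg] at h
  rw [gfco]
  omega

theorem gfpp_rename {n : ℕ} (k : ℕ) (σ : Equiv.Perm (Fin n)) :
    rename σ (gfpp n k) = gfpp n k := by
  simp only [gfpp, map_sum, map_pow, rename_X]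
  exact Equiv.sum_comp σ (fun i => (X i ^ k : MvPolynomial (Fin n) ℤ))

theorem gfAlt_pp {n : ℕ} {q : MvPolynomial (Fin n) ℤ} (hq : GfAlt q) (k : ℕ) :
    GfAlt (gfpp n k * q) := by
  intro i j hij
  rw [map_mul, gfpp_rename, hq i j hij]; ring

theorem gfAlt_Del (n : ℕ) : GfAlt (gfDel n) := by
  intro i j hij
  rw [gfDel, map_sum, ← Finset.sum_neg_distrib]
  refine Fintype.sum_equiv (Equiv.mulRight (Equiv.swap i j)) _ _ fun w => ?_
  simp only [map_mul, rename_C, map_prod, map_pow, rename_X, Equiv.coe_mulRight,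
    Equiv.Perm.sign_swap hij]
  rw [← Equiv.prod_comp (Equiv.swap i j)]
  simp

theorem gfAlt_prod {n : ℕ} {q : MvPolynomial (Fin n) ℤ} (hq : GfAlt q) (s : Finset ℕ) (ks : ℕ → ℕ) :
    GfAlt ((∏ j ∈ s, gfpp n (ks j)) * q) := by
  classical
  induction s using Finset.induction_on with
  | empty => simpa using hq
  | insert a s ha ih => rw [Finset.prod_insert ha, mul_assoc]; exact gfAlt_pp ih _

theorem gfAlt_pow {n : ℕ} {q : MvPolynomial (Fin n) ℤ} (hq : GfAlt q) (N : ℕ) :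
    GfAlt (gfpp n 1 ^ N * q) := by
  induction N with
  | zero => simpa using hq
  | succ N ih => rw [pow_succ', mul_assoc]; exact gfAlt_pp ih _

noncomputable def gfV {n : ℕ} (m : Fin n → ℕ) : ℚ :=
  (Matrix.vandermonde (fun i => (m i : ℚ))).det

noncomputable def gffac {n : ℕ} (m : Fin n → ℕ) : ℚ := ∏ i, ((m i).factorial : ℚ)

theorem gffac_ne {n : ℕ} (m : Fin n → ℕ) : gffac m ≠ 0 :=
  Finset.prod_ne_zero_iff.2 fun i _ => by positivity

theorem gfV_ne {n : ℕ} {m : Fin n → ℕ} (h : Function.Injective m) : gfV m ≠ 0 := by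
  rw [gfV, Matrix.det_vandermonde_ne_zero_iff]
  intro a b hab
  exact h (by simpa using hab)

noncomputable def gfeps (n : ℕ) : ℚ := ((Equiv.Perm.sign (Fin.revPerm : Equiv.Perm (Fin n)) : ℤ) : ℚ)

theorem gfeps_ne (n : ℕ) : gfeps n ≠ 0 := by
  rw [gfeps]
  rcases Int.units_eq_one_or (Equiv.Perm.sign (Fin.revPerm : Equiv.Perm (Fin n))) with h | h <;>
    simp [h]

theorem gf_sumdesc {n : ℕ} (m : Fin n → ℕ) :
    ∑ w : Equiv.Perm (Fin n), ((Equiv.Perm.sign w : ℤ) : ℚ) *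
      ∏ i, ((m i).descFactorial (n - 1 - (w i : ℕ)) : ℚ) = gfeps n * gfV m := by
  rw [gfV, Matrix.det_eval_matrixOfPolynomials_eq_det_vandermonde (fun i => (m i : ℚ))
      (fun i => descPochhammer ℚ i)
      (fun i => descPochhammer_natDegree ℚ i)
      (fun i => monic_descPochhammer ℚ i), gfeps, ← Matrix.det_permute', ← Matrix.det_transpose,
      Matrix.det_apply']
  refine Finset.sum_congr rfl fun w _ => ?_
  congr 1
  refine Finset.prod_congr rfl fun i _ => ?_
  simp only [Matrix.transpose_apply, Matrix.submatrix_apply, Matrix.of_apply, id,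
    descPochhammer_eval_eq_descFactorial, Fin.revPerm_apply, Fin.val_rev]
  congr 2
  omega

theorem gfco_base {n : ℕ} (m : Fin n → ℕ) (N : ℕ)
    (hN : ∑ i, m i = N + ∑ i : Fin n, (n - 1 - (i : ℕ))) :
    (gfco m (gfpp n 1 ^ N * gfDel n) : ℚ) * gffac m = gfeps n * N.factorial * gfV m := by
  rw [mul_right_comm, ← gf_sumdesc, gfco, gfDel, Finset.mul_sum, coeff_sum, Int.cast_sum,
    Finset.sum_mul, Finset.sum_mul]
  refine Finset.sum_congr rfl fun w _ => ?_
  set s : Fin n →₀ ℕ := Finsupp.equivFunOnFinite.symm fun i => n - 1 - (w i : ℕ) with hs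
  have h1 : (∏ i : Fin n, X i ^ (n - 1 - ((w i : ℕ))) : MvPolynomial (Fin n) ℤ) =
      monomial s 1 := by
    rw [monomial_eq, Finsupp.prod_fintype _ _ (by simp)]; simp [hs]
  rw [h1, C_mul_monomial, mul_one, coeff_mul_monomial']
  have hsum : ∑ i, s i = ∑ i : Fin n, (n - 1 - (i : ℕ)) := by
    simp only [hs, Finsupp.equivFunOnFinite_symm_apply_apply]
    exact Equiv.sum_comp w (fun i : Fin n => n - 1 - (i : ℕ))
  split_ifs with hle
  · have hle' : ∀ i, s i ≤ m i := fun i => hle i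
    have hpp : gfpp n 1 = ∑ i, X i := by simp [gfpp]
    set d := Finsupp.equivFunOnFinite.symm m - s with hd
    have hdi : ∀ i, d i = m i - s i := fun i => by simp [hd]
    have hdsum : ∑ i, d i = N := by
      have : ∑ i, d i + ∑ i, s i = ∑ i, m i := by
        rw [← Finset.sum_add_distrib]
        refine Finset.sum_congr rfl fun i _ => ?_
        rw [hdi]; have := hle' i; omega
      omega
    rw [hpp, coeff_sum_X_pow_of_fintype, Finsupp.sum_fintype _ _ (by simp), if_pos hdsum,
      Finsupp.multinomial_eq_of_support_subset (Finset.subset_univ _)]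
    have hsp := Nat.multinomial_spec Finset.univ d
    rw [hdsum] at hsp
    have hsp' : (∏ i, ((d i).factorial : ℚ)) * (Nat.multinomial Finset.univ d : ℚ) =
      N.factorial := by exact_mod_cast hsp
    have hf : gffac m = (∏ i, ((d i).factorial : ℚ)) *
        ∏ i, ((m i).descFactorial (n - 1 - (w i : ℕ)) : ℚ) := by
      rw [gffac, ← Finset.prod_mul_distrib]
      refine Finset.prod_congr rfl fun i _ => ?_
      rw [hdi]
      exact_mod_cast (Nat.factorial_mul_descFactorial (hle' i)).symm
    rw [hf, ← hsp']
    push_cast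
    ring
  · have : ∃ i, m i < s i := by
      by_contra! hcon
      exact hle fun i => hcon i
    obtain ⟨i, hi⟩ := this
    have h0 : ∏ i, ((m i).descFactorial (n - 1 - (w i : ℕ)) : ℚ) = 0 := by
      refine Finset.prod_eq_zero (Finset.mem_univ i) ?_
      have hz : (m i).descFactorial (n - 1 - (w i : ℕ)) = 0 := Nat.descFactorial_of_lt hi
      rw [hz]; simp
    rw [h0]; simp

theorem gf_pairprod {n : ℕ} (i : Fin n) (g : Fin n → ℚ) :
    ∏ j ∈ Finset.univ.erase i, g j = ∏ a : Fin n, ∏ b ∈ Finset.Ioi a,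
      (if a = i then g b else if b = i then g a else 1) := by
  have h1 : ∀ a : Fin n, ∏ b ∈ Finset.Ioi a,
      (if a = i then g b else if b = i then g a else 1) =
      (if a = i then ∏ b ∈ Finset.Ioi i, g b else 1) * (if a < i then g a else 1) := by
    intro a
    by_cases h : a = i
    · subst h; simp
    · simp [h, Finset.prod_ite_eq']
  rw [Finset.prod_congr rfl fun a _ => h1 a, Finset.prod_mul_distrib, Finset.prod_ite_eq',
    if_pos (Finset.mem_univ i), ← Finset.prod_filter]
  rw [← Finset.prod_union]
  · refine Finset.prod_congr ?_ fun _ _ => rfl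
    ext j
    simp [lt_or_lt_iff_ne, ne_comm]
  · rw [Finset.disjoint_left]
    intro a ha hb
    simp at ha hb
    exact absurd ha (not_lt.2 hb.le)

theorem gfV_update {n : ℕ} (m : Fin n → ℕ) (i : Fin n) (k : ℕ) (h : k ≤ m i) :
    gfV (Function.update m i (m i - k)) * ∏ j ∈ Finset.univ.erase i, ((m i : ℚ) - m j) =
      gfV m * ∏ j ∈ Finset.univ.erase i, ((m i : ℚ) - k - m j) := by
  rw [gfV, gfV, Matrix.det_vandermonde, Matrix.det_vandermonde, gf_pairprod, gf_pairprod,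
    ← Finset.prod_mul_distrib, ← Finset.prod_mul_distrib]
  refine Finset.prod_congr rfl fun a _ => ?_
  rw [← Finset.prod_mul_distrib, ← Finset.prod_mul_distrib]
  refine Finset.prod_congr rfl fun b hb => ?_
  have hab : a ≠ b := (Finset.mem_Ioi.1 hb).ne
  by_cases h1 : a = i
  · subst h1
    rw [Function.update_self, Function.update_of_ne hab.symm, Nat.cast_sub h]
    simp; ring
  · by_cases h2 : b = i
    · subst h2
      rw [Function.update_self, Function.update_of_ne hab, Nat.cast_sub h]
      simp [h1]; ring
    · simp [h1, h2, Function.update_of_ne]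

theorem gfr_eq {n : ℕ} {m : Fin n → ℕ} (hm : Function.Injective m) (i : Fin n) (k : ℕ)
    (h : k ≤ m i) :
    gfr m i k * gffac (Function.update m i (m i - k)) * gfV m =
      -(k : ℚ) * gfV (Function.update m i (m i - k)) * gffac m := by
  have hV := gfV_update m i k h
  have hne : ∏ j ∈ Finset.univ.erase i, ((m i : ℚ) - m j) ≠ 0 := by
    refine Finset.prod_ne_zero_iff.2 fun j hj => ?_
    rw [sub_ne_zero]
    intro he
    exact Finset.ne_of_mem_erase hj (hm (by exact_mod_cast he.symm))
  have hf : gffac (Function.update m i (m i - k)) * ((m i).descFactorial k : ℚ) = gffac m := by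
    rw [gffac, gffac, ← Finset.mul_prod_erase _ _ (Finset.mem_univ i),
      ← Finset.mul_prod_erase _ (fun i => ((m i).factorial : ℚ)) (Finset.mem_univ i)]
    have : ∏ x ∈ Finset.univ.erase i, (((Function.update m i (m i - k) x).factorial : ℕ) : ℚ) =
        ∏ x ∈ Finset.univ.erase i, ((m x).factorial : ℚ) := by
      refine Finset.prod_congr rfl fun j hj => ?_
      rw [Function.update_of_ne (Finset.ne_of_mem_erase hj)]
    rw [this, Function.update_self, mul_right_comm]
    congr 1
    exact_mod_cast Nat.factorial_mul_descFactorial h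
  rw [gfr, ← hf, div_mul_eq_mul_div, div_mul_eq_mul_div, div_eq_iff hne]
  linear_combination (k : ℚ) * gffac (Function.update m i (m i - k)) *
    ((m i).descFactorial k : ℚ) * hV

theorem gfI_smul {n : ℕ} (ks : ℕ → ℕ) (l : ℕ) (c : ℚ) (g : (Fin n → ℕ) × (ℕ → ℚ) → ℚ)
    (st : (Fin n → ℕ) × (ℕ → ℚ)) : gfI ks l (fun st => c * g st) st = c * gfI ks l g st := by
  induction l generalizing g with
  | zero => rfl
  | succ l ih =>
    rw [gfI, gfI, ← ih]
    congr 1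
    funext st
    rw [gfT, gfT, Finset.mul_sum]
    refine Finset.sum_congr rfl fun i _ => ?_
    ring

noncomputable def gfg {n : ℕ} (ks : ℕ → ℕ) (L N j : ℕ) (st : (Fin n → ℕ) × (ℕ → ℚ)) : ℚ :=
  (gfco st.1 ((∏ s ∈ Finset.Ico j L, gfpp n (ks s)) * (gfpp n 1 ^ N * gfDel n)) : ℚ) *
    gffac st.1 / gfV st.1

theorem gfT_g {n : ℕ} (m0 : Fin n → ℕ) (ks : ℕ → ℕ) (L N j : ℕ) (hj : j < L)
    (st : (Fin n → ℕ) × (ℕ → ℚ)) (hg : GfGood m0 ks j st) :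
    gfT ks j (gfg ks L N (j + 1)) st = -(ks j : ℚ) * gfg ks L N j st := by
  have hV := gfV_ne hg.inj
  rw [gfg, Finset.prod_eq_prod_Ico_succ_bot hj, mul_assoc, gfco_pp, gfT, ← mul_div_assoc,
    eq_div_iff hV, Int.cast_sum, Finset.sum_mul, Finset.sum_mul, Finset.mul_sum]
  refine Finset.sum_congr rfl fun i _ => ?_
  have halt := gfAlt_prod (gfAlt_pow (gfAlt_Del n) N) (Finset.Ico (j + 1) L) ks
  split_ifs with hle
  · simp only [gfg, gfnext]
    by_cases hinj : Function.Injective (Function.update st.1 i (st.1 i - ks j))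
    · have hV' := gfV_ne hinj
      have := gfr_eq hg.inj i (ks j) hle
      rw [← mul_div_assoc, div_mul_eq_mul_div, div_eq_iff hV']
      linear_combination ((gfco (Function.update st.1 i (st.1 i - ks j))
        ((∏ s ∈ Finset.Ico (j + 1) L, gfpp n (ks s)) * (gfpp n 1 ^ N * gfDel n)) : ℤ) : ℚ) * this
    · rw [gfAlt_co halt _ hinj]; simp
  · have : gfr st.1 i (ks j) = 0 := by
      by_contra hne
      exact hle (gfr_ne hne).1
    rw [this]; simp

theorem gfI_g {n : ℕ} (m0 : Fin n → ℕ) (ks : ℕ → ℕ) (L N j : ℕ) (hj : j ≤ L)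
    (st : (Fin n → ℕ) × (ℕ → ℚ)) (hg : GfGood m0 ks 0 st) :
    gfI ks j (gfg ks L N j) st = (∏ s ∈ Finset.range j, -(ks s : ℚ)) * gfg ks L N 0 st := by
  induction j with
  | zero => simp [gfI]
  | succ j ih =>
    rw [gfI, gfI_congr hg j _ _ (fun st hst => gfT_g m0 ks L N j hj st hst), gfI_smul,
      ih (by omega), Finset.prod_range_succ]
    ring

theorem gf_inj_sum {n : ℕ} (m : Fin n → ℕ) (h : Function.Injective m) :
    ∑ i : Fin n, (n - 1 - (i : ℕ)) ≤ ∑ i, m i := by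
  have h1 := Finset.sum_range_le_sum (s := Finset.univ.image (fun i => (m i : ℤ))) (c := 0)
    (by simp)
  have hinj : Function.Injective (fun i => (m i : ℤ)) := fun a b hab => h (by simpa using hab)
  rw [Finset.card_image_of_injective _ hinj, Finset.sum_image (fun a _ b _ hab => hinj hab)] at h1
  have h2 : ∑ i : Fin n, (n - 1 - (i : ℕ)) = ∑ i ∈ Finset.range n, i := by
    rw [Fin.sum_univ_eq_sum_range (fun i => n - 1 - i), Finset.sum_range_reflect (fun i => i)]
  rw [h2]
  zify
  simpa using h1

theorem gfI_one {n : ℕ} (lam : Fin n → ℕ) (hsum : ∑ i, lam i = n) (ks : ℕ → ℕ) (L : ℕ)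
    (pts : ℕ → ℚ) (hg : GfGood (gfmu n lam) ks 0 (gfmu n lam, pts)) :
    gfI ks L (fun _ => 1) (gfmu n lam, pts) =
      (∏ s ∈ Finset.range L, -(ks s : ℚ)) *
        SigmaChar n lam (Multiset.map ks (Multiset.range L)) := by
  have hms : (Multiset.map ks (Multiset.range L)).sum = ∑ s ∈ Finset.range L, ks s := rfl
  have hmu : ∑ i, gfmu n lam i = n + ∑ i : Fin n, (n - 1 - (i : ℕ)) := by
    simp only [gfmu]; rw [Finset.sum_add_distrib, hsum]
  rw [SigmaChar, hms]
  split_ifs with hle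
  · set K := ∑ s ∈ Finset.range L, ks s with hK
    set N := n - K with hN
    have h1 : frobChar n lam (Multiset.map ks (Multiset.range L) + Multiset.replicate N 1) =
        gfco (gfmu n lam) ((∏ s ∈ Finset.Ico 0 L, gfpp n (ks s)) * (gfpp n 1 ^ N * gfDel n)) := by
      rw [frobChar, Multiset.map_add, Multiset.prod_add, Multiset.map_replicate,
        Multiset.prod_replicate, Multiset.map_map, mul_assoc, ← Finset.range_eq_Ico]
      rfl
    have h2 : frobChar n lam (Multiset.replicate n 1) =
        gfco (gfmu n lam) (gfpp n 1 ^ n * gfDel n) := by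
      rw [frobChar, Multiset.map_replicate, Multiset.prod_replicate]
      rfl
    have h3 := gfco_base (gfmu n lam) n hmu
    have h4 := gfI_g (gfmu n lam) ks L N L le_rfl _ hg
    have h5 : gfI ks L (gfg ks L N L) (gfmu n lam, pts) =
        gfI ks L (fun _ => (gfeps n * N.factorial) * 1) (gfmu n lam, pts) := by
      refine gfI_congr hg L _ _ fun st hst => ?_
      rw [gfg, Finset.Ico_self, Finset.prod_empty, one_mul, gfco_base, mul_one]
      · rw [mul_div_assoc, div_self (gfV_ne hst.inj), mul_one]
      · have := hst.tot
        omega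
    rw [h5, gfI_smul, gfg, ← h1] at h4
    rw [h2]
    have hV := gfV_ne hg.inj
    have hf := gffac_ne (gfmu n lam)
    have he := gfeps_ne n
    have hNf : (N.factorial : ℚ) ≠ 0 := by positivity
    have hnf : (n.factorial : ℚ) ≠ 0 := by positivity
    have hd : (N.factorial : ℚ) * (n.descFactorial K : ℚ) = n.factorial := by
      exact_mod_cast Nat.factorial_mul_descFactorial hle
    simp only at hV h4
    have h3' : ((gfco (gfmu n lam) (gfpp n 1 ^ n * gfDel n) : ℤ) : ℚ) =
        gfeps n * n.factorial * gfV (gfmu n lam) / gffac (gfmu n lam) := by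
      rw [eq_div_iff hf, h3]
    rw [h3', ← hd]
    have hdn : (n.descFactorial K : ℚ) ≠ 0 := by
      intro h0; rw [h0, mul_zero] at hd; exact hnf hd.symm
    generalize gfI ks L (fun _ => 1) (gfmu n lam, pts) = I at *
    have : I = (gfeps n * N.factorial * I) / (gfeps n * N.factorial) := by field_simp
    rw [this, h4]
    field_simp
  · have := gfI_congr hg L (fun _ => 1) (fun _ => 0 * 1) (by
      intro st hst
      exfalso
      have h1 := hst.tot
      have h2 := gf_inj_sum st.1 hst.inj
      omega)
    rw [this, gfI_smul]; simp

end gfPart4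
/-- generalized Frobenius formula: for a partition `λ` of `n` with
reciprocal Cauchy transform `H` and integers `k₁,…,k_l ≥ 1` (here `k r` is `k_{r+1}`),
`(-1)^l k₁⋯k_l Σ^λ_{k₁,…,k_l} = [z₁^{-1}]⋯[z_l^{-1}] [∏_r H(z_r)⋯H(z_r-k_r+1) ⋅
∏_{s<t} (z_s-z_t)(z_s-z_t+k_t-k_s) / ((z_s-z_t-k_s)(z_s-z_t+k_t))]`. -/
theorem generalized_frobenius_formula (n : ℕ) (lam : Fin n → ℕ)
    (hanti : ∀ i j : Fin n, i ≤ j → lam j ≤ lam i)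
    (hsum : ∑ i, lam i = n)
    (l : ℕ) (k : Fin l → ℕ) (hk : ∀ r, 1 ≤ k r) :
    (-1 : ℚ) ^ l * (∏ r, (k r : ℚ)) *
        SigmaChar n lam (Multiset.map k Finset.univ.val) =
      extractInv l
        ((∏ r : Fin l, ∏ j ∈ Finset.range (k r),
            Hof n lam (zVar l r - (j : ItLT l))) *
          ∏ p ∈ Finset.univ.filter (fun p : Fin l × Fin l => p.1 < p.2),
            ((zVar l p.1 - zVar l p.2) *
                (zVar l p.1 - zVar l p.2 + (k p.2 : ItLT l) - (k p.1 : ItLT l))) /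
              ((zVar l p.1 - zVar l p.2 - (k p.1 : ItLT l)) *
                (zVar l p.1 - zVar l p.2 + (k p.2 : ItLT l)))) := by
  set ks : ℕ → ℕ := fun s => if h : s < l then k ⟨s, h⟩ else 0 with hks
  have hkr : ∀ r : Fin l, k r = ks r := fun r => by simp [hks]
  have h0 : GfGood (gfmu n lam) ks 0 (gfmu n lam, fun _ => 0) := by
    refine ⟨?_, by simp, fun k => by simp [gfCn, gfCd]⟩
    have hanti' : StrictAnti (gfmu n lam) := by
      intro i j hij
      have h1 := hanti i j hij.le
      have h2 : (i : ℕ) < j := hij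
      have h3 := j.2
      simp only [gfmu]
      omega
    exact hanti'.injective
  have hA : (∏ r : Fin l, ∏ j ∈ Finset.range (k r), Hof n lam (zVar l r - (j : ItLT l))) *
          ∏ p ∈ Finset.univ.filter (fun p : Fin l × Fin l => p.1 < p.2),
            ((zVar l p.1 - zVar l p.2) *
                (zVar l p.1 - zVar l p.2 + (k p.2 : ItLT l) - (k p.1 : ItLT l))) /
              ((zVar l p.1 - zVar l p.2 - (k p.1 : ItLT l)) *
                (zVar l p.1 - zVar l p.2 + (k p.2 : ItLT l))) = gfA n lam ks l := by
    rw [gfA]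
    congr 1
    · rw [← Fin.prod_univ_eq_prod_range
        (fun r => ∏ j ∈ Finset.range (ks r), Hof n lam (zVar l r - (j : ItLT l)))]
      refine Finset.prod_congr rfl fun r _ => ?_
      rw [hkr]
    · rw [Finset.prod_sigma' (Finset.range l) (fun t => Finset.range t)]
      refine Finset.prod_bij (fun p _ => ⟨(p.2 : ℕ), (p.1 : ℕ)⟩) ?_ ?_ ?_ ?_
      · rintro ⟨a, b⟩ h
        simpa using h
      · rintro ⟨a, b⟩ _ ⟨c, d⟩ _ h
        simp only [Sigma.mk.injEq, heq_eq_eq] at h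
        ext
        · exact h.2
        · exact h.1
      · rintro ⟨t, s⟩ h
        simp only [Finset.mem_sigma, Finset.mem_range] at h
        exact ⟨(⟨s, h.2.trans h.1⟩, ⟨t, h.1⟩), by simpa using h.2, rfl⟩
      · rintro ⟨a, b⟩ _
        rw [hkr, hkr]
        rfl
  rw [hA]
  have h1 := gf_extract n lam ks h0 l 1
  simp only [map_one, mul_one] at h1
  rw [h1, gfI_one lam hsum ks l _ h0]
  have hM : Multiset.map k Finset.univ.val = Multiset.map ks (Multiset.range l) := by
    have : (Multiset.range l) = Multiset.map (fun r : Fin l => (r : ℕ)) Finset.univ.val := by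
      have h2 := congrArg Finset.val (Fin.map_valEmbedding_univ (n := l))
      rw [Finset.map_val, Nat.Iio_eq_range] at h2
      exact h2.symm
    rw [this, Multiset.map_map]
    exact Multiset.map_congr rfl fun r _ => hkr r
  rw [hM]
  congr 1
  rw [← Fin.prod_univ_eq_prod_range (fun s => -(ks s : ℚ)), Finset.prod_neg]
  simp [hkr]
end
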